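/- Let X be an irreducible smooth projective variety of dimension at least 2 contained in the projective space P^n over an algebraically closed field k of characteristic 0. For any closed point P0 on X and any integer a > 1, a general hypersurface H of degree a in P^n passing through P0 intersects X in an irreducible smooth subvariety of codimension 1 on X. -/

import Mathlib

open MvPolynomial

/-- Points of projective `n`-space over `k`. -/
abbrev ProjPt (k : Type) [Field k] (n : ℕ) : Type := Projectivization k (Fin (n+1) → k)

variable {k : Type} [Field k] {n : ℕ}

/-- A polynomial vanishes at a projective point if it vanishes on every
representative vector of the point. -/
def VanishesAt (h : MvPolynomial (Fin (n+1)) k) (x : ProjPt k n) : Prop :=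
  ∀ (v : Fin (n+1) → k) (hv : v ≠ 0), Projectivization.mk k v hv = x → eval v h = 0

/-- Common projective zero locus of a family of polynomials. -/
def projZeroLocus (I : Set (MvPolynomial (Fin (n+1)) k)) : Set (ProjPt k n) :=
  {x | ∀ h ∈ I, VanishesAt h x}

/-- Zariski-closed subsets of projective space: common zero loci of families of
homogeneous polynomials. -/
def IsClosedSub (S : Set (ProjPt k n)) : Prop :=
  ∃ I : Set (MvPolynomial (Fin (n+1)) k),
    (∀ h ∈ I, ∃ m : ℕ, h.IsHomogeneous m) ∧ S = projZeroLocus I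

/-- A subset is irreducible if it is nonempty and is not covered by two closed sets
unless it is contained in one of them. -/
def IsIrredSub (S : Set (ProjPt k n)) : Prop :=
  S.Nonempty ∧ ∀ C₁ C₂ : Set (ProjPt k n),
    IsClosedSub C₁ → IsClosedSub C₂ → S ⊆ C₁ ∪ C₂ → S ⊆ C₁ ∨ S ⊆ C₂

/-- `T` is an irreducible closed subset of `S` (in the subspace Zariski topology). -/
def IsClosedIrredIn (S T : Set (ProjPt k n)) : Prop :=
  T ⊆ S ∧ (∃ C, IsClosedSub C ∧ T = C ∩ S) ∧ IsIrredSub T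

/-- `S` has dimension at least `m` : there is a strictly increasing chain of `m+1`
irreducible closed subsets of `S`. -/
def DimGE (S : Set (ProjPt k n)) (m : ℕ) : Prop :=
  ∃ c : Fin (m+1) → Set (ProjPt k n), StrictMono c ∧ ∀ i, IsClosedIrredIn S (c i)

/-- `S` has (Krull) dimension exactly `d`. -/
def HasDim (S : Set (ProjPt k n)) (d : ℕ) : Prop :=
  DimGE S d ∧ ¬ DimGE S (d+1)

/-- The gradient vector of a polynomial at a vector. -/
noncomputable def gradientAt (h : MvPolynomial (Fin (n+1)) k) (v : Fin (n+1) → k) :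
    Fin (n+1) → k :=
  fun j => eval v (pderiv j h)

/-- The homogeneous polynomials vanishing identically on `S`. -/
def homVanishingPolys (S : Set (ProjPt k n)) : Set (MvPolynomial (Fin (n+1)) k) :=
  {h | (∃ m : ℕ, h.IsHomogeneous m) ∧ ∀ x ∈ S, VanishesAt h x}

/-- Jacobian criterion: `S` (of dimension `d`) is smooth at `x` if the span of the
gradients at `x` of the homogeneous polynomials vanishing on `S` has rank `n - d`. -/
def SmoothPtAt (S : Set (ProjPt k n)) (d : ℕ) (x : ProjPt k n) : Prop :=
  ∀ (v : Fin (n+1) → k) (hv : v ≠ 0), Projectivization.mk k v hv = x →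
    Module.finrank k
      ↥(Submodule.span k {w | ∃ h ∈ homVanishingPolys S, w = gradientAt h v}) = n - d

/-- `S` is an irreducible smooth projective variety of dimension `d`. -/
def IsSmoothVariety (S : Set (ProjPt k n)) (d : ℕ) : Prop :=
  IsClosedSub S ∧ IsIrredSub S ∧ HasDim S d ∧ ∀ x ∈ S, SmoothPtAt S d x

/-- Polynomial function on a `k`-vector space `W`. -/
def IsPolyFun (k : Type) [Field k] {W : Type} [AddCommGroup W] [Module k W] (F : W → k) : Prop :=
  ∃ (r : ℕ) (lam : Fin r → (W →ₗ[k] k)) (p : MvPolynomial (Fin r) k),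
    F = fun w => eval (fun i => lam i w) p

/-- Zariski-closed subsets of a `k`-vector space `W` : common zero loci of families
of polynomial functions. -/
def IsZClosed (k : Type) [Field k] {W : Type} [AddCommGroup W] [Module k W] (Z : Set W) : Prop :=
  ∃ ℱ : Set (W → k), (∀ F ∈ ℱ, IsPolyFun k F) ∧ Z = {w | ∀ F ∈ ℱ, F w = 0}

/-- `Z` is a cone: stable under scalar multiplication. -/
def IsCone (k : Type) [Field k] {W : Type} [AddCommGroup W] [Module k W] (Z : Set W) : Prop :=
  ∀ (c : k) (w : W), w ∈ Z → c • w ∈ Z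

/-- `q` points of projective space are in general position: if `q < n+1` their
representative vectors are linearly independent; if `q = n+1` any `n` of them are
linearly independent. -/
def InGeneralPosition {q : ℕ} (P : Fin q → ProjPt k n) : Prop :=
  if q < n + 1 then LinearIndependent k (fun s => (P s).rep)
  else ∀ s : Fin q, LinearIndependent k (fun t : {t : Fin q // t ≠ s} => (P t.1).rep)

/-- Transcendence degree as a natural number. -/
noncomputable def tdn (k : Type) [Field k] (A : Type) [CommRing A] [Algebra k A] : ℕ :=
  (Algebra.trdeg k A).toNat

theorem tdn_cast (k : Type) [Field k] (A : Type) [CommRing A] [Algebra k A] 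
    [Algebra.FiniteType k A] : ((tdn k A : ℕ) : Cardinal) = Algebra.trdeg k A := by
  unfold tdn
  exact Cardinal.cast_toNat_of_lt_aleph0 (trdeg_lt_aleph0_of_finiteType)

theorem tdn_ge_of_algInd {k : Type} [Field k] {A : Type} [CommRing A] [Algebra k A] 
    [Algebra.FiniteType k A] {ι : Type} [Finite ι] (x : ι → A) (hx : AlgebraicIndependent k x) :
    Nat.card ι ≤ tdn k A := by
  have h := hx.cardinalMk_le_trdeg
  rw [← tdn_cast k A] at h
  have : (Nat.card ι : Cardinal) = Cardinal.mk ι := Nat.cast_card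
  rw [← this] at h
  exact_mod_cast h

theorem tdn_exists_basis (k : Type) [Field k] (A : Type) [CommRing A] [IsDomain A] [Algebra k A] 
    [Algebra.FiniteType k A] : ∃ x : Fin (tdn k A) → A, IsTranscendenceBasis k x := by
  obtain ⟨ι, x, hx⟩ := exists_isTranscendenceBasis' k A
  have h := hx.cardinalMk_eq_trdeg
  rw [← tdn_cast k A] at h
  have hfin : Finite ι := by
    apply Cardinal.lt_aleph0_iff_finite.mp
    rw [h]; exact Cardinal.natCast_lt_aleph0
  have h2 : (Nat.card ι : Cardinal) = Cardinal.mk ι := Nat.cast_card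
  rw [← h2] at h
  have h3 : Nat.card ι = tdn k A := by exact_mod_cast h
  have e : Fin (tdn k A) ≃ ι := (h3 ▸ (Finite.equivFin ι).symm)
  exact ⟨x ∘ e, (isTranscendenceBasis_equiv e).mpr hx⟩

theorem tdn_le_of_surjective {k : Type} [Field k] {A B : Type} [CommRing A] [CommRing B]
    [Algebra k A] [Algebra k B] [Algebra.FiniteType k A] (f : A →ₐ[k] B)
    (hf : Function.Surjective f) : tdn k B ≤ tdn k A := by
  have hB : Algebra.FiniteType k B := Algebra.FiniteType.of_surjective f hf
  have := trdeg_le_of_surjective f hf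
  rw [← tdn_cast k A, ← tdn_cast k B] at this
  exact_mod_cast this

theorem tdn_le_of_injective {k : Type} [Field k] {A B : Type} [CommRing A] [CommRing B]
    [Algebra k A] [Algebra k B] [Algebra.FiniteType k A] [Algebra.FiniteType k B] (f : A →ₐ[k] B)
    (hf : Function.Injective f) : tdn k A ≤ tdn k B := by
  have := trdeg_le_of_injective f hf
  rw [← tdn_cast k A, ← tdn_cast k B] at this
  exact_mod_cast this

theorem tdn_eq_of_equiv {k : Type} [Field k] {A B : Type} [CommRing A] [CommRing B]
    [Algebra k A] [Algebra k B] (f : A ≃ₐ[k] B) : tdn k A = tdn k B := by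
  unfold tdn
  rw [f.trdeg_eq]

/-- A1 -/
theorem tdn_lt_of_surjective {k : Type} [Field k] {A B : Type} [CommRing A] [CommRing B]
    [IsDomain A] [IsDomain B]
    [Algebra k A] [Algebra k B] [Algebra.FiniteType k A] (f : A →ₐ[k] B)
    (hf : Function.Surjective f) (g : A) (hg0 : g ≠ 0) (hg : f g = 0) : tdn k B < tdn k A := by
  have hB : Algebra.FiniteType k B := Algebra.FiniteType.of_surjective f hf
  obtain ⟨y, hy⟩ := tdn_exists_basis k B
  choose x hx using fun i => hf (y i)
  have hfx : f ∘ x = y := funext hx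
  have hxi : AlgebraicIndependent k x := AlgebraicIndependent.of_comp f (by rw [hfx]; exact hy.1)
  have htr : Transcendental (Algebra.adjoin k (Set.range x)) g := by
    intro halg
    obtain ⟨r, hr0, hr⟩ := halg.exists_nonzero_dvd (mem_nonZeroDivisors_of_ne_zero hg0)
    apply hr0
    have hfr : f (r : A) = 0 := by
      obtain ⟨c, hc⟩ := hr
      have : (r : A) = g * c := hc
      rw [this, map_mul, hg, zero_mul]
    have hmem : (r : A) ∈ (aeval (R := k) x).range :=
      (Algebra.adjoin_range_eq_range_aeval k x).le r.2
    obtain ⟨p, hp⟩ := hmem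
    have hp' : aeval x p = (r : A) := hp
    have : aeval y p = 0 := by
      rw [← hfx, ← hfr, ← hp']; exact (MvPolynomial.comp_aeval_apply x f p).symm
    have hp0 : p = 0 := by
      have := hy.1.eq_zero_of_aeval_eq_zero p this
      exact this
    apply Subtype.ext
    rw [← hp', hp0]; simp
  have h := (hxi.option_iff_transcendental g).mpr htr
  have := tdn_ge_of_algInd _ h
  simp at this
  omega

/-- A2 -/
theorem tdn_le_succ_of_minimalPrime {k : Type} [Field k] {A : Type} [CommRing A] [IsDomain A]
    [Algebra k A] [Algebra.FiniteType k A] (g : A) (q : Ideal A)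
    (hq : q ∈ (Ideal.span {g}).minimalPrimes) : tdn k A ≤ tdn k (A ⧸ q) + 1 := by
  haveI : IsNoetherianRing A := Algebra.FiniteType.isNoetherianRing k A
  haveI hqp : q.IsPrime := hq.1.1
  have hht : q.height ≤ 1 := Ideal.height_le_one_of_isPrincipal_of_mem_minimalPrimes _ q hq
  obtain ⟨s, φ, hinj, hfin⟩ := exists_finite_inj_algHom_of_fg k A
  letI := φ.toRingHom.toAlgebra
  haveI : IsScalarTower k (MvPolynomial (Fin s) k) A :=
    IsScalarTower.of_algebraMap_eq (fun x => (φ.commutes x).symm)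
  haveI : Module.Finite (MvPolynomial (Fin s) k) A := hfin
  haveI : FaithfulSMul (MvPolynomial (Fin s) k) A :=
    (faithfulSMul_iff_algebraMap_injective _ _).mpr hinj
  have hs : tdn k A = s := by
    have hb := (IsTranscendenceBasis.mvPolynomial (Fin s) k).algebraMap_comp (A := A)
    have h := hb.cardinalMk_eq_trdeg
    unfold tdn
    rw [← h]; simp
  set q' : Ideal (MvPolynomial (Fin s) k) := q.comap φ.toRingHom with hq'
  haveI : q.LiesOver q' := ⟨rfl⟩
  haveI : q'.IsPrime := Ideal.comap_isPrime _ _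
  have hht' : q'.height ≤ 1 := by
    have := Ideal.height_eq_height_add_of_liesOver_of_hasGoingDown q' q
    rw [this] at hht
    exact le_trans le_self_add hht
  have hmem : ∀ p, p ∈ q' ↔ Ideal.Quotient.mkₐ k q (φ p) = 0 := by
    intro p
    simp only [Ideal.Quotient.mkₐ_eq_mk, Ideal.Quotient.eq_zero_iff_mem]
    rfl
  let ψ : MvPolynomial (Fin s) k →ₐ[k] A ⧸ q := (Ideal.Quotient.mkₐ k q).comp φ
  rw [hs]
  by_cases hbot : q' = ⊥
  · have : AlgebraicIndependent k (fun i => ψ (X i)) := by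
      rw [algebraicIndependent_iff]
      intro p hp
      have h1 : aeval (fun i => ψ (X i)) p = ψ p := by
        rw [← MvPolynomial.comp_aeval_apply]; simp
      rw [h1] at hp
      have := (hmem p).mpr hp
      rw [hbot] at this
      exact this
    have := tdn_ge_of_algInd _ this
    simp at this
    omega
  · obtain ⟨π, hπ, hprime⟩ := Ideal.IsPrime.exists_mem_prime_of_ne_bot ‹q'.IsPrime› hbot
    have h1 : q'.height = 1 := by
      apply le_antisymm hht'
      rw [Order.one_le_iff_pos, pos_iff_ne_zero]
      intro h0
      apply hbot
      exact Ideal.height_eq_zero_iff_eq_bot.mp h0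
    have hspan := Ideal.eq_span_singleton_of_height_eq_one h1 hπ hprime
    obtain ⟨j, hj⟩ : ∃ j, degreeOf j π ≠ 0 := by
      by_contra! hall
      have : π.vars = ∅ := by
        ext j; simp [mem_vars_iff_degreeOf_ne_zero, hall]
      rw [vars_eq_empty_iff_eq_C] at this
      apply hprime.not_isUnit
      have hne := hprime.ne_zero
      rw [this] at hne ⊢
      exact (IsUnit.mk0 _ (by intro h; apply hne; rw [h]; simp)).map C
    have : AlgebraicIndependent k (fun i : {i : Fin s // i ≠ j} => ψ (X i.1)) := by
      rw [algebraicIndependent_iff]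
      intro p hp
      have h1 : aeval (fun i : {i : Fin s // i ≠ j} => ψ (X i.1)) p
          = ψ (rename Subtype.val p) := by
        rw [← MvPolynomial.comp_aeval_apply, rename_eq_aeval]; rfl
      rw [h1] at hp
      have h2 := (hmem _).mpr hp
      rw [hspan, Ideal.mem_span_singleton] at h2
      obtain ⟨c, hc⟩ := h2
      by_contra hp0
      have hr0 : rename Subtype.val p ≠ 0 := by
        intro h; apply hp0
        exact rename_injective _ Subtype.val_injective (by simpa using h)
      have hc0 : c ≠ 0 := by rintro rfl; apply hr0; rw [hc, mul_zero]
      have h3 := degreeOf_mul_eq (n := j) hprime.ne_zero hc0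
      rw [← hc] at h3
      have h4 : j ∈ (rename Subtype.val p).vars := by
        rw [mem_vars_iff_degreeOf_ne_zero]; omega
      obtain ⟨i, _, hi⟩ := mem_vars_rename _ _ h4
      exact i.2 hi
    have := tdn_ge_of_algInd _ this
    simp at this
    omega

theorem tdn_quot_lt {k : Type} [Field k] {A : Type} [CommRing A]
    [Algebra k A] [Algebra.FiniteType k A] (p q : Ideal A) [p.IsPrime] [q.IsPrime] (h : p < q) :
    tdn k (A ⧸ q) < tdn k (A ⧸ p) := by
  obtain ⟨x, hxq, hxp⟩ := SetLike.exists_of_lt h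
  refine tdn_lt_of_surjective (Ideal.Quotient.factorₐ k h.le) (Ideal.Quotient.factor_surjective h.le)
    (Ideal.Quotient.mk p x) ?_ ?_
  · rwa [Ne, Ideal.Quotient.eq_zero_iff_mem]
  · simpa [Ideal.Quotient.eq_zero_iff_mem] using hxq

theorem tdn_quot_le {k : Type} [Field k] {A : Type} [CommRing A]
    [Algebra k A] [Algebra.FiniteType k A] (p q : Ideal A) (h : p ≤ q) :
    tdn k (A ⧸ q) ≤ tdn k (A ⧸ p) := 
  tdn_le_of_surjective (Ideal.Quotient.factorₐ k h) (Ideal.Quotient.factor_surjective h)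

theorem tdn_quot_le_succ {k : Type} [Field k] {A : Type} [CommRing A]
    [Algebra k A] [Algebra.FiniteType k A] (p q : Ideal A) [p.IsPrime] (f : A)
    (h : q ∈ (p ⊔ Ideal.span {f}).minimalPrimes) :
    tdn k (A ⧸ p) ≤ tdn k (A ⧸ q) + 1 := by
  have hpq : p ≤ q := le_trans le_sup_left h.1.2
  have h1 : q.map (Ideal.Quotient.mk p) ∈
      (Ideal.span {Ideal.Quotient.mk p f}).minimalPrimes := by
    have := Ideal.minimalPrimes_map_of_surjective (f := Ideal.Quotient.mk p)
      Ideal.Quotient.mk_surjective (Ideal.span {f})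
    rw [Ideal.map_span, Set.image_singleton] at this
    rw [this, Ideal.mk_ker, sup_comm]
    exact ⟨q, h, rfl⟩
  have h2 := tdn_le_succ_of_minimalPrime (k := k) _ _ h1
  have h3 := tdn_eq_of_equiv (DoubleQuot.quotQuotEquivQuotOfLEₐ k hpq)
  exact h2.trans (by rw [← h3]; rfl)

theorem tdn_field_zero {k : Type} [Field k] {A : Type} [CommRing A]
    [Algebra k A] [Algebra.FiniteType k A] (M : Ideal A) [M.IsMaximal] : tdn k (A ⧸ M) = 0 := by
  letI := Ideal.Quotient.field M
  have : Module.Finite k (A ⧸ M) := finite_of_finite_type_of_isJacobsonRing k (A ⧸ M)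
  have : Algebra.IsAlgebraic k (A ⧸ M) := inferInstance
  unfold tdn
  rw [trdeg_eq_zero]; simp

/-- A3 -/
theorem height_add_tdn_le {k : Type} [Field k] {A : Type} [CommRing A]
    [Algebra k A] [Algebra.FiniteType k A] (M : Ideal A) [M.IsMaximal] :
    ∀ (t : ℕ) (p : Ideal A) [p.IsPrime], p ≤ M → tdn k (A ⧸ p) = t →
      p.height + t ≤ M.height := by
  have : IsNoetherianRing A := Algebra.FiniteType.isNoetherianRing k A
  intro t
  induction t using Nat.strong_induction_on with
  | _ t ih =>
  intro p hp hpM ht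
  by_cases hEq : p = M
  · subst hEq
    rw [tdn_field_zero] at ht
    subst ht; simp
  · have hlt : p < M := lt_of_le_of_ne hpM hEq
    obtain ⟨f, hfM, hfp⟩ := SetLike.exists_of_lt hlt
    have : p ⊔ Ideal.span {f} ≤ M := sup_le hpM (by simpa [Ideal.span_le] using hfM)
    obtain ⟨q, hq, hqM⟩ := Ideal.exists_minimalPrimes_le this
    have : q.IsPrime := hq.1.1
    have hpq : p < q := lt_of_le_of_ne (le_trans le_sup_left hq.1.2) (by
      rintro rfl; apply hfp
      exact hq.1.2 (Ideal.mem_sup_right (Ideal.mem_span_singleton_self f)))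
    have h1 := tdn_quot_lt (k := k) p q hpq
    have h2 := tdn_quot_le_succ (k := k) p q f hq
    have h3 := ih (tdn k (A ⧸ q)) (by omega) q hqM rfl
    have h4 : p.height + 1 ≤ q.height := Order.add_one_le_of_lt (Ideal.height_strict_mono_of_isPrime hpq)
    have h5 : t = 1 + tdn k (A ⧸ q) := by omega
    rw [h5]; push_cast
    rw [← add_assoc]
    exact le_trans (by gcongr) h3

/-- A4: regular local rings are domains. -/
theorem isDomain_of_regular (r : ℕ) : ∀ (B : Type) [CommRing B] [IsLocalRing B]
    [IsNoetherianRing B] (g : Fin r → B),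
    Ideal.span (Set.range g) = IsLocalRing.maximalIdeal B →
    (r : ℕ∞) ≤ (IsLocalRing.maximalIdeal B).height → IsDomain B := by
  induction r with
  | zero =>
    intro B _ _ _ g hg _
    have : IsLocalRing.maximalIdeal B = ⊥ := by rw [← hg]; simp
    exact (IsLocalRing.isField_iff_maximalIdeal_eq.mpr this).isDomain
  | succ r ih =>
    intro B _ _ _ g hg hdim
    set m := IsLocalRing.maximalIdeal B with hm
    have hmin : ∀ p ∈ minimalPrimes B, ¬ m ≤ p := by
      intro p hp hle
      have hpp : p.IsPrime := hp.1.1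
      have hpm : p = m := le_antisymm (IsLocalRing.le_maximalIdeal hpp.ne_top) hle
      have : m.height = 0 := by
        rw [← hpm]; exact Ideal.height_eq_zero_iff.mpr hp
      rw [this] at hdim
      simp at hdim
    have hsq : ¬ m ≤ m ^ 2 := by
      intro hle
      have : m = ⊥ := Submodule.eq_bot_of_le_smul_of_le_jacobson_bot m m
        (IsNoetherian.noetherian _) (by simpa [pow_two] using hle)
        (IsLocalRing.maximalIdeal_le_jacobson _)
      rw [this, Ideal.height_bot] at hdim
      simp at hdim
    obtain ⟨x, hxm, hx2, hxp⟩ : ∃ x ∈ m, x ∉ m ^ 2 ∧ ∀ p ∈ minimalPrimes B, x ∉ p := by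
      by_contra! hcon
      have hfin : (insert (m ^ 2) (minimalPrimes B)).Finite :=
        (minimalPrimes.finite_of_isNoetherianRing B).insert _
      have := (Ideal.subset_union_prime_finite hfin (f := id) (m ^ 2) (m ^ 2) (I := m) (by
        intro i hi h1 h2
        rcases hi with rfl | hi
        · exact absurd rfl h1
        · exact hi.1.1)).mp (by
        intro x hx
        by_cases h2 : x ∈ m ^ 2
        · simp only [Set.mem_iUnion]
          exact ⟨m ^ 2, Set.mem_insert _ _, h2⟩
        · obtain ⟨p, hp, hxp⟩ := hcon x hx h2
          simp only [Set.mem_iUnion]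
          exact ⟨p, Set.mem_insert_of_mem _ hp, hxp⟩)
      obtain ⟨i, hi, hle⟩ := this
      rcases hi with rfl | hi
      · exact hsq hle
      · exact hmin i hi hle
    -- coefficients
    have hx' := hxm
    rw [← hg, Ideal.mem_span_range_iff_exists_fun] at hx'
    obtain ⟨c, hc⟩ := hx'
    have hgm : ∀ i, g i ∈ m := fun i => by
      rw [← hg]; exact Ideal.subset_span ⟨i, rfl⟩
    obtain ⟨i, hi⟩ : ∃ i, IsUnit (c i) := by
      by_contra! hcon
      apply hx2
      rw [← hc, pow_two]
      exact Ideal.sum_mem _ fun i _ => Ideal.mul_mem_mul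
        ((IsLocalRing.mem_maximalIdeal _).mpr (hcon i)) (hgm i)
    have hxtop : Ideal.span {x} ≠ ⊤ := by
      intro h
      have : Ideal.span {x} ≤ m := by simpa [Ideal.span_le] using hxm
      rw [h] at this
      exact (Ideal.IsPrime.ne_top (IsLocalRing.maximalIdeal.isMaximal B).isPrime) (top_le_iff.mp this)
    have : Nontrivial (B ⧸ Ideal.span {x}) := Ideal.Quotient.nontrivial_iff.mpr hxtop
    have hloc : IsLocalRing (B ⧸ Ideal.span {x}) :=
      IsLocalRing.of_surjective' (Ideal.Quotient.mk _) Ideal.Quotient.mk_surjective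
    have hmap : m.map (Ideal.Quotient.mk (Ideal.span {x}))
        = IsLocalRing.maximalIdeal (B ⧸ Ideal.span {x}) := by
      have := IsLocalRing.map_maximalIdeal_of_surjective (Ideal.Quotient.mk (Ideal.span {x})) Ideal.Quotient.mk_surjective
      exact this
    have hdom : IsDomain (B ⧸ Ideal.span {x}) := by
      refine ih (B ⧸ Ideal.span {x})
        (fun j => Ideal.Quotient.mk _ (g (i.succAbove j))) ?_ ?_
      · rw [← hmap, ← hg, Ideal.map_span]
        apply le_antisymm
        · apply Ideal.span_mono
          rintro _ ⟨j, rfl⟩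
          exact ⟨g (i.succAbove j), ⟨_, rfl⟩, rfl⟩
        · rw [Ideal.span_le]
          rintro _ ⟨_, ⟨j, rfl⟩, rfl⟩
          rcases Fin.eq_self_or_eq_succAbove i j with rfl | ⟨j', rfl⟩
          · have h0 : Ideal.Quotient.mk (Ideal.span {x}) x = 0 :=
              Ideal.Quotient.eq_zero_iff_mem.mpr (Ideal.mem_span_singleton_self x)
            have hc2 := congrArg (Ideal.Quotient.mk (Ideal.span {x})) hc
            rw [h0, Fin.sum_univ_succAbove _ j, map_add, map_mul, map_sum] at hc2
            have hu := hi.map (Ideal.Quotient.mk (Ideal.span {x}))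
            rw [SetLike.mem_coe, ← Ideal.unit_mul_mem_iff_mem _ hu, eq_neg_of_add_eq_zero_left hc2]
            refine (neg_mem_iff (H := Ideal.span (Set.range fun l => Ideal.Quotient.mk (Ideal.span {x}) (g (j.succAbove l))))).mpr ?_
            apply Ideal.sum_mem
            intro l _
            rw [map_mul]
            exact Ideal.mul_mem_left _ _ (Ideal.subset_span ⟨l, rfl⟩)
          · exact Ideal.subset_span ⟨j', rfl⟩
      · have h1 := Ideal.height_le_ringKrullDim_quotient_add_one hxm
        have h2 := IsLocalRing.maximalIdeal_height_eq_ringKrullDim (R := B ⧸ Ideal.span {x})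
        rw [← h2] at h1
        have h3 : m.height ≤ (IsLocalRing.maximalIdeal (B ⧸ Ideal.span {x})).height + 1 := by
          exact_mod_cast h1
        have h4 := hdim.trans h3
        push_cast at h4
        exact (ENat.add_le_add_iff_right (by simp)).mp h4
    have hxprime : (Ideal.span {x}).IsPrime := (Ideal.Quotient.isDomain_iff_prime _).mp hdom
    obtain ⟨p, hp, hpx⟩ := Ideal.exists_minimalPrimes_le (I := ⊥) (J := Ideal.span {x}) bot_le
    have hpp : p.IsPrime := hp.1.1
    have hpb : p = ⊥ := by
      apply Submodule.eq_bot_of_le_smul_of_le_jacobson_bot m p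
        (IsNoetherian.noetherian _) _ (IsLocalRing.maximalIdeal_le_jacobson _)
      intro y hy
      obtain ⟨z, hz⟩ := Ideal.mem_span_singleton.mp (hpx hy)
      have hzp : z ∈ p := by
        rw [hz] at hy
        exact (hpp.mem_or_mem hy).resolve_left (hxp p hp)
      rw [hz, smul_eq_mul]
      exact Ideal.mul_mem_mul hxm hzp
    rw [hpb] at hpp
    exact IsDomain.of_bot_isPrime B

section HomSec
attribute [local instance] MvPolynomial.gradedAlgebra

/-- homogeneous ideals -/
def HomI {k : Type} [Field k] {σ : Type} (I : Ideal (MvPolynomial σ k)) : Prop :=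
  ∀ f ∈ I, ∀ i, homogeneousComponent i f ∈ I

theorem homI_iff {k : Type} [Field k] {σ : Type} (I : Ideal (MvPolynomial σ k)) :
    HomI I ↔ I.IsHomogeneous (homogeneousSubmodule σ k) := by
  constructor
  · intro h i f hf
    have := h f hf i
    rwa [← decomposition.decompose'_apply] at this
  · intro h f hf i
    have := h i hf
    rw [← decomposition.decompose'_apply]
    exact this

theorem HomI.sup {k : Type} [Field k] {σ : Type} {I J : Ideal (MvPolynomial σ k)}
    (hI : HomI I) (hJ : HomI J) : HomI (I ⊔ J) := by
  rw [homI_iff] at *; exact hI.sup hJ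

theorem HomI.inf {k : Type} [Field k] {σ : Type} {I J : Ideal (MvPolynomial σ k)}
    (hI : HomI I) (hJ : HomI J) : HomI (I ⊓ J) := by
  rw [homI_iff] at *; exact hI.inf hJ

theorem HomI.mul {k : Type} [Field k] {σ : Type} {I J : Ideal (MvPolynomial σ k)}
    (hI : HomI I) (hJ : HomI J) : HomI (I * J) := by
  rw [homI_iff] at *; exact hI.mul hJ

theorem HomI.top {k : Type} [Field k] {σ : Type} : HomI (⊤ : Ideal (MvPolynomial σ k)) :=
  fun _ _ _ => trivial

theorem HomI.pow {k : Type} [Field k] {σ : Type} {I : Ideal (MvPolynomial σ k)}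
    (hI : HomI I) (m : ℕ) : HomI (I ^ m) := by
  induction m with
  | zero => rw [pow_zero, Ideal.one_eq_top]; exact HomI.top
  | succ m ih => rw [pow_succ]; exact ih.mul hI

theorem HomI.radical {k : Type} [Field k] {σ : Type} {I : Ideal (MvPolynomial σ k)}
    (hI : HomI I) : HomI I.radical := by
  rw [homI_iff] at *; exact hI.radical

theorem HomI.span {k : Type} [Field k] {σ : Type} (s : Set (MvPolynomial σ k))
    (hs : ∀ f ∈ s, ∃ m : ℕ, f.IsHomogeneous m) : HomI (Ideal.span s) := by
  rw [homI_iff]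
  apply Ideal.homogeneous_span
  intro x hx
  obtain ⟨m, hm⟩ := hs x hx
  exact ⟨m, hm⟩

theorem HomI.minimalPrime {k : Type} [Field k] {σ : Type} {I q : Ideal (MvPolynomial σ k)}
    (hI : HomI I) (hq : q ∈ I.minimalPrimes) : HomI q := by
  rw [homI_iff] at *
  have hqp : q.IsPrime := hq.1.1
  have h1 : (q.homogeneousCore (homogeneousSubmodule σ k)).toIdeal.IsPrime := 
    Ideal.IsPrime.homogeneousCore hqp
  have h2 : I ≤ (q.homogeneousCore (homogeneousSubmodule σ k)).toIdeal := by
    rw [← hI.toIdeal_homogeneousCore_eq_self]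
    exact Ideal.homogeneousCore_mono _ hq.1.2
  have h3 := hq.2 ⟨h1, h2⟩ (Ideal.toIdeal_homogeneousCore_le _ _)
  rw [Ideal.IsHomogeneous.iff_eq]
  exact le_antisymm (Ideal.toIdeal_homogeneousCore_le _ _) h3

theorem HomI.isPrime {k : Type} [Field k] {σ : Type} {I : Ideal (MvPolynomial σ k)}
    (hI : HomI I) (hne : I ≠ ⊤) (h : ∀ (f g : MvPolynomial σ k) (a b : ℕ), f.IsHomogeneous a →
      g.IsHomogeneous b → f * g ∈ I → f ∈ I ∨ g ∈ I) : I.IsPrime := by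
  rw [homI_iff] at hI
  refine hI.isPrime_of_homogeneous_mem_or_mem hne ?_
  rintro x y ⟨a, ha⟩ ⟨b, hb⟩ hxy
  exact h x y a b ha hb hxy

end HomSec

/-- The irrelevant ideal. -/
noncomputable def irrI (k : Type) [Field k] (n : ℕ) : Ideal (MvPolynomial (Fin (n+1)) k) :=
  RingHom.ker (eval (0 : Fin (n+1) → k))

theorem irrI_maximal (k : Type) [Field k] (n : ℕ) : (irrI k n).IsMaximal :=
  RingHom.ker_isMaximal_of_surjective _ (fun c => ⟨C c, by simp⟩)

theorem mem_irrI {k : Type} [Field k] {n : ℕ} (f : MvPolynomial (Fin (n+1)) k) :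
    f ∈ irrI k n ↔ eval 0 f = 0 := RingHom.mem_ker

theorem irrI_eq (k : Type) [Field k] (n : ℕ) :
    irrI k n = Ideal.span (Set.range (X : Fin (n+1) → MvPolynomial (Fin (n+1)) k)) := by
  have hle : Ideal.span (Set.range (X : Fin (n+1) → MvPolynomial (Fin (n+1)) k)) ≤ irrI k n := by
    rw [Ideal.span_le]; rintro _ ⟨j, rfl⟩
    simp [mem_irrI]
  apply le_antisymm _ hle
  intro f hf
  have : f - C (eval 0 f) ∈ Ideal.span (Set.range (X : Fin (n+1) → MvPolynomial (Fin (n+1)) k)) := by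
    clear hf
    induction f using MvPolynomial.induction_on with
    | C a => simp
    | add p q hp hq =>
      have : p + q - C (eval 0 (p + q)) = (p - C (eval 0 p)) + (q - C (eval 0 q)) := by
        simp; ring
      rw [this]; exact Ideal.add_mem _ hp hq
    | mul_X p i hp =>
      have : p * X i - C (eval 0 (p * X i)) = p * X i := by simp
      rw [this]
      exact Ideal.mul_mem_left _ _ (Ideal.subset_span ⟨i, rfl⟩)
  rw [mem_irrI] at hf
  rwa [hf, C_0, sub_zero] at this

theorem irrI_le_iff {k : Type} [Field k] {n : ℕ} (I : Ideal (MvPolynomial (Fin (n+1)) k)) :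
    irrI k n ≤ I ↔ ∀ j, X j ∈ I := by
  rw [irrI_eq, Ideal.span_le]
  exact ⟨fun h j => h ⟨j, rfl⟩, fun h => by rintro _ ⟨j, rfl⟩; exact h j⟩

theorem HomI.le_irrI {k : Type} [Field k] {n : ℕ} {I : Ideal (MvPolynomial (Fin (n+1)) k)}
    (hI : HomI I) (hne : I ≠ ⊤) : I ≤ irrI k n := by
  intro f hf
  have h := hI f hf 0
  rw [homogeneousComponent_zero] at h
  rw [mem_irrI]
  by_contra hc
  apply hne
  rw [Ideal.eq_top_iff_one]
  have : coeff 0 f = eval 0 f := by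
    rw [← constantCoeff_eq, eval_zero]
  rw [this] at h
  have h2 := I.mul_mem_left (C (eval 0 f)⁻¹) h
  rwa [← C_mul, inv_mul_cancel₀ hc, C_1] at h2

theorem homog_sum_eq {k : Type} [Field k] {σ : Type} [Fintype σ] {f : MvPolynomial σ k} {a : ℕ}
    (hf : f.IsHomogeneous a) {d : σ →₀ ℕ} (hd : d ∈ f.support) : ∑ i, d i = a := by
  have := hf (mem_support_iff.mp hd)
  rw [← this, Finsupp.weight_apply, Finsupp.sum_fintype _ _ (by simp)]
  simp

theorem eval_smul_of_homog {k : Type} [Field k] {σ : Type} [Fintype σ] {f : MvPolynomial σ k}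
    {a : ℕ} (hf : f.IsHomogeneous a) (c : k) (v : σ → k) :
    eval (c • v) f = c ^ a * eval v f := by
  rw [eval_eq', eval_eq', Finset.mul_sum]
  refine Finset.sum_congr rfl fun d hd => ?_
  simp only [Pi.smul_apply, smul_eq_mul, mul_pow, Finset.prod_mul_distrib]
  rw [Finset.prod_pow_eq_pow_sum, homog_sum_eq hf hd]
  ring

/-- Vanishing ideal of a set in projective space. -/
def Iv {k : Type} [Field k] {n : ℕ} (S : Set (ProjPt k n)) : Ideal (MvPolynomial (Fin (n+1)) k) where
  carrier := {f | ∀ (v : Fin (n+1) → k) (hv : v ≠ 0), Projectivization.mk k v hv ∈ S → eval v f = 0}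
  add_mem' := by
    intro f g hf hg v hv hS
    rw [map_add, hf v hv hS, hg v hv hS, add_zero]
  zero_mem' := by intro v hv _; simp
  smul_mem' := by
    intro c f hf v hv hS
    rw [smul_eq_mul, map_mul, hf v hv hS, mul_zero]

theorem mem_Iv {k : Type} [Field k] {n : ℕ} {S : Set (ProjPt k n)}
    {f : MvPolynomial (Fin (n+1)) k} : f ∈ Iv S ↔ ∀ (v : Fin (n+1) → k) (hv : v ≠ 0),
      Projectivization.mk k v hv ∈ S → eval v f = 0 := Iff.rfl

theorem mk_smul_eq {k : Type} [Field k] {n : ℕ} (v : Fin (n+1) → k) (hv : v ≠ 0) (c : k)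
    (hcv : c • v ≠ 0) : Projectivization.mk k (c • v) hcv = Projectivization.mk k v hv := by
  rw [Projectivization.mk_eq_mk_iff']
  exact ⟨c, rfl⟩

theorem eval_smul_eq_poly {k : Type} [Field k] {σ : Type} [Fintype σ] (f : MvPolynomial σ k)
    (c : k) (v : σ → k) : eval (c • v) f =
      ∑ i ∈ Finset.range (f.totalDegree + 1), c ^ i * eval v (homogeneousComponent i f) := by
  conv_lhs => rw [← sum_homogeneousComponent f]
  rw [map_sum]
  exact Finset.sum_congr rfl fun i _ =>
    eval_smul_of_homog (homogeneousComponent_isHomogeneous i f) c v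

theorem homogComp_eval_zero {k : Type} [Field k] [Infinite k] {σ : Type} [Fintype σ]
    (f : MvPolynomial σ k) (v : σ → k) (h : ∀ c : k, c ≠ 0 → eval (c • v) f = 0) (i : ℕ) :
    eval v (homogeneousComponent i f) = 0 := by
  classical
  let P : Polynomial k := ∑ i ∈ Finset.range (f.totalDegree + 1),
    Polynomial.monomial i (eval v (homogeneousComponent i f))
  have hP : P = 0 := by
    apply Polynomial.eq_zero_of_infinite_isRoot
    apply Set.Infinite.mono (s := {0}ᶜ)
    · intro c hc
      have := h c hc
      rw [eval_smul_eq_poly] at this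
      rw [Set.mem_setOf_eq, Polynomial.IsRoot, ← this]
      simp only [P, Polynomial.eval_finsetSum, Polynomial.eval_monomial]
      exact Finset.sum_congr rfl fun i _ => mul_comm _ _
    · exact (Set.finite_singleton 0).infinite_compl
  by_cases hi : i ∈ Finset.range (f.totalDegree + 1)
  · have := congrArg (fun p => Polynomial.coeff p i) hP
    simp only [P, Polynomial.finsetSum_coeff, Polynomial.coeff_monomial, Polynomial.coeff_zero] at this
    rw [Finset.sum_ite_eq' , if_pos hi] at this
    exact this
  · rw [homogeneousComponent_eq_zero _ _ (by simpa using hi)]; simp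

theorem Iv_homI {k : Type} [Field k] [Infinite k] {n : ℕ} (S : Set (ProjPt k n)) : HomI (Iv S) := by
  intro f hf i v hv hS
  apply homogComp_eval_zero
  intro c hc
  have hcv : c • v ≠ 0 := smul_ne_zero hc hv
  apply hf _ hcv
  rwa [mk_smul_eq v hv c hcv]

theorem Iv_anti {k : Type} [Field k] {n : ℕ} {S T : Set (ProjPt k n)} (h : S ⊆ T) : Iv T ≤ Iv S :=
  fun _ hf v hv hS => hf v hv (h hS)

theorem vanishesAt_mk {k : Type} [Field k] {n : ℕ} {f : MvPolynomial (Fin (n+1)) k} {a : ℕ}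
    (hf : f.IsHomogeneous a) (v : Fin (n+1) → k) (hv : v ≠ 0) :
    VanishesAt f (Projectivization.mk k v hv) ↔ eval v f = 0 := by
  constructor
  · intro h; exact h v hv rfl
  · intro h w hw e
    rw [Projectivization.mk_eq_mk_iff'] at e
    obtain ⟨c, rfl⟩ := e
    rw [eval_smul_of_homog hf, h, mul_zero]

theorem mem_of_forall_Iv {k : Type} [Field k] {n : ℕ} {S : Set (ProjPt k n)}
    (hS : IsClosedSub S) (v : Fin (n+1) → k) (hv : v ≠ 0) (h : ∀ f ∈ Iv S, eval v f = 0) :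
    Projectivization.mk k v hv ∈ S := by
  obtain ⟨I, hI, rfl⟩ := hS
  intro f hf
  obtain ⟨m, hm⟩ := hI f hf
  rw [vanishesAt_mk hm]
  apply h
  intro w hw hwS
  exact hwS f hf w hw rfl

theorem mem_closed_iff {k : Type} [Field k] {n : ℕ} {S : Set (ProjPt k n)}
    (hS : IsClosedSub S) (v : Fin (n+1) → k) (hv : v ≠ 0) :
    Projectivization.mk k v hv ∈ S ↔ ∀ f ∈ Iv S, eval v f = 0 :=
  ⟨fun h f hf => hf v hv h, mem_of_forall_Iv hS v hv⟩

theorem closed_subset_of_Iv_le {k : Type} [Field k] {n : ℕ} {S T : Set (ProjPt k n)}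
    (hT : IsClosedSub T) (h : Iv T ≤ Iv S) : S ⊆ T := by
  intro x
  induction x using Projectivization.ind with
  | h v hv =>
    intro hx
    exact mem_of_forall_Iv hT v hv fun f hf => h hf v hv hx

theorem IsClosedSub.inter' {k : Type} [Field k] {n : ℕ} {S T : Set (ProjPt k n)}
    (hS : IsClosedSub S) (hT : IsClosedSub T) : IsClosedSub (S ∩ T) := by
  obtain ⟨I, hI, rfl⟩ := hS
  obtain ⟨J, hJ, rfl⟩ := hT
  refine ⟨I ∪ J, ?_, ?_⟩
  · rintro h (hh | hh)
    · exact hI h hh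
    · exact hJ h hh
  · ext x
    constructor
    · rintro ⟨h1, h2⟩ h (hh | hh)
      · exact h1 h hh
      · exact h2 h hh
    · intro h
      exact ⟨fun f hf => h f (Or.inl hf), fun f hf => h f (Or.inr hf)⟩

theorem Iv_ne_top {k : Type} [Field k] {n : ℕ} {S : Set (ProjPt k n)} (hS : S.Nonempty) :
    Iv S ≠ ⊤ := by
  obtain ⟨x, hx⟩ := hS
  induction x using Projectivization.ind with
  | h v hv =>
    intro h
    have : (1 : MvPolynomial (Fin (n+1)) k) ∈ Iv S := by rw [h]; trivial
    have := this v hv hx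
    simp at this

theorem Iv_isPrime {k : Type} [Field k] [Infinite k] {n : ℕ} {S : Set (ProjPt k n)}
    (hS : IsIrredSub S) : (Iv S).IsPrime := by
  apply (Iv_homI S).isPrime (Iv_ne_top hS.1)
  intro f g a b hf hg hfg
  have hc : ∀ (f : MvPolynomial (Fin (n+1)) k) (a : ℕ), f.IsHomogeneous a →
      IsClosedSub (projZeroLocus {f}) := fun f a hf => ⟨{f}, by
        rintro h rfl; exact ⟨a, hf⟩, rfl⟩
  have key : ∀ (f : MvPolynomial (Fin (n+1)) k), S ⊆ projZeroLocus {f} → f ∈ Iv S := by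
    intro f h v hv hvS
    exact h hvS f rfl v hv rfl
  refine (hS.2 _ _ (hc f a hf) (hc g b hg) ?_).imp (key f) (key g)
  intro x
  induction x using Projectivization.ind with
  | h v hv =>
    intro hx
    have := hfg v hv hx
    rw [map_mul] at this
    rcases mul_eq_zero.mp this with h | h
    · left; rintro _ rfl; exact (vanishesAt_mk hf v hv).mpr h
    · right; rintro _ rfl; exact (vanishesAt_mk hg v hv).mpr h

theorem isIrredSub_of_prime {k : Type} [Field k] {n : ℕ} {S : Set (ProjPt k n)}
    (hS : (Iv S).IsPrime) : IsIrredSub S := by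
  constructor
  · by_contra h
    rw [Set.not_nonempty_iff_eq_empty] at h
    apply hS.ne_top
    rw [Ideal.eq_top_iff_one]
    intro v hv hx
    rw [h] at hx; exact hx.elim
  · rintro C₁ C₂ ⟨I, hI, rfl⟩ ⟨J, hJ, rfl⟩ hsub
    by_contra! hcon
    obtain ⟨h1, h2⟩ := hcon
    have key : ∀ I : Set (MvPolynomial (Fin (n+1)) k), ¬ S ⊆ projZeroLocus I →
        ∃ f ∈ I, f ∉ Iv S := by
      intro I h
      by_contra! hc
      apply h
      intro x hx f hf w hw e
      exact hc f hf w hw (e ▸ hx)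
    obtain ⟨f, hf, hfS⟩ := key I h1
    obtain ⟨g, hg, hgS⟩ := key J h2
    have : f * g ∈ Iv S := by
      intro v hv hx
      rw [map_mul]
      rcases hsub hx with h | h
      · rw [h f hf v hv rfl, zero_mul]
      · rw [h g hg v hv rfl, mul_zero]
    rcases hS.mem_or_mem this with h | h
    · exact hfS h
    · exact hgS h

/-- zero locus of an ideal -/
def Vp {k : Type} [Field k] {n : ℕ} (I : Ideal (MvPolynomial (Fin (n+1)) k)) : Set (ProjPt k n) :=
  projZeroLocus {f | f ∈ I ∧ ∃ m : ℕ, f.IsHomogeneous m}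

theorem Vp_closed {k : Type} [Field k] {n : ℕ} (I : Ideal (MvPolynomial (Fin (n+1)) k)) :
    IsClosedSub (Vp I) := ⟨_, fun _ h => h.2, rfl⟩

theorem mk_mem_Vp {k : Type} [Field k] {n : ℕ} {I : Ideal (MvPolynomial (Fin (n+1)) k)}
    (hI : HomI I) (v : Fin (n+1) → k) (hv : v ≠ 0) :
    Projectivization.mk k v hv ∈ Vp I ↔ ∀ f ∈ I, eval v f = 0 := by
  constructor
  · intro h f hf
    rw [← sum_homogeneousComponent f, map_sum]
    apply Finset.sum_eq_zero
    intro i _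
    exact h _ ⟨hI f hf i, i, homogeneousComponent_isHomogeneous i f⟩ v hv rfl
  · rintro h f ⟨hf, m, hm⟩
    exact (vanishesAt_mk hm v hv).mpr (h f hf)

theorem Iv_Vp {k : Type} [Field k] [IsAlgClosed k] {n : ℕ} {q : Ideal (MvPolynomial (Fin (n+1)) k)}
    (hq : HomI q) (hp : q.IsPrime) (hirr : ¬ irrI k n ≤ q) : Iv (Vp q) = q := by
  apply le_antisymm
  · intro f hf
    rw [irrI_le_iff] at hirr
    push Not at hirr
    obtain ⟨j, hj⟩ := hirr
    have : X j * f ∈ q := by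
      rw [← IsPrime.vanishingIdeal_zeroLocus (K := k) q]
      rw [mem_vanishingIdeal_iff]
      intro v hv
      rw [mem_zeroLocus_iff] at hv
      by_cases h0 : v = 0
      · subst h0; simp
      · have h1 := hf v h0 ((mk_mem_Vp hq v h0).mpr fun g hg => hv g hg)
        have h2 : aeval v f = eval v f := rfl
        rw [map_mul, h2, h1, mul_zero]
    exact (hp.mem_or_mem this).resolve_left hj
  · intro f hf v hv hx
    exact (mk_mem_Vp hq v hv).mp hx f hf

theorem irrI_not_le_of_nonempty {k : Type} [Field k] {n : ℕ} {S : Set (ProjPt k n)}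
    (hS : S.Nonempty) : ¬ irrI k n ≤ Iv S := by
  obtain ⟨x, hx⟩ := hS
  induction x using Projectivization.ind with
  | h v hv =>
    intro h
    rw [irrI_le_iff] at h
    apply hv
    funext j
    have := h j v hv hx
    simpa using this

theorem Iv_lt_irrI {k : Type} [Field k] [Infinite k] {n : ℕ} {S : Set (ProjPt k n)}
    (hS : S.Nonempty) : Iv S < irrI k n :=
  lt_of_le_not_ge ((Iv_homI S).le_irrI (Iv_ne_top hS)) (irrI_not_le_of_nonempty hS)

theorem one_le_tdn_of_lt_irrI {k : Type} [Field k] {n : ℕ} {q : Ideal (MvPolynomial (Fin (n+1)) k)}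
    (hp : q.IsPrime) (h : q < irrI k n) : 1 ≤ tdn k (MvPolynomial (Fin (n+1)) k ⧸ q) := by
  have := irrI_maximal k n
  have h1 := tdn_quot_lt (k := k) q (irrI k n) h
  omega

theorem chain_tdn {k : Type} [Field k] [Infinite k] {n : ℕ} {X : Set (ProjPt k n)}
    (hX : IsClosedSub X) (m : ℕ) (c : Fin (m+1) → Set (ProjPt k n)) (hc : StrictMono c)
    (hi : ∀ i, IsClosedIrredIn X (c i)) (i : ℕ) (him : i < m + 1) :
    i + 1 ≤ tdn k (MvPolynomial (Fin (n+1)) k ⧸ Iv (c ⟨i, him⟩)) := by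
  induction i with
  | zero => exact one_le_tdn_of_lt_irrI (Iv_isPrime (hi _).2.2) (Iv_lt_irrI (hi _).2.2.1)
  | succ i ih =>
    have h1 := ih (by omega)
    have hcl : ∀ i, IsClosedSub (c i) := by
      intro i
      obtain ⟨C, hC, e⟩ := (hi i).2.1
      rw [e]; exact hC.inter' hX
    have hlt : c ⟨i, by omega⟩ < c ⟨i+1, him⟩ := hc (by simp [Fin.lt_def])
    have hI : Iv (c ⟨i+1, him⟩) < Iv (c ⟨i, by omega⟩) := by
      refine lt_of_le_not_ge (Iv_anti hlt.le) fun h => ?_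
      exact hlt.not_ge (closed_subset_of_Iv_le (hcl _) h)
    have := Iv_isPrime (hi ⟨i+1, him⟩).2.2
    have := Iv_isPrime (hi ⟨i, by omega⟩).2.2
    have := tdn_quot_lt (k := k) _ _ hI
    omega

theorem DimGE.le_tdn {k : Type} [Field k] [Infinite k] {n : ℕ} {X : Set (ProjPt k n)}
    (hX : IsClosedSub X) (hirr : IsIrredSub X) (m : ℕ) (h : DimGE X m) :
    m + 1 ≤ tdn k (MvPolynomial (Fin (n+1)) k ⧸ Iv X) := by
  obtain ⟨c, hc, hi⟩ := h
  have h1 := chain_tdn hX m c hc hi m (by omega)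
  have := Iv_isPrime hirr
  have := Iv_isPrime (hi ⟨m, by omega⟩).2.2
  have := tdn_quot_le (k := k) _ _ (Iv_anti (hi ⟨m, by omega⟩).1)
  omega

theorem tdn_irrI {k : Type} [Field k] {n : ℕ} : tdn k (MvPolynomial (Fin (n+1)) k ⧸ irrI k n) = 0 := by
  have := irrI_maximal k n
  exact tdn_field_zero _

/-- A hypersurface section drops the transcendence degree by exactly one. -/
theorem tdn_section {k : Type} [Field k] {n : ℕ} (p q : Ideal (MvPolynomial (Fin (n+1)) k))
    [p.IsPrime] (f : MvPolynomial (Fin (n+1)) k) (hf : f ∉ p)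
    (hq : q ∈ (p ⊔ Ideal.span {f}).minimalPrimes) :
    tdn k (MvPolynomial (Fin (n+1)) k ⧸ p) = tdn k (MvPolynomial (Fin (n+1)) k ⧸ q) + 1 := by
  have := hq.1.1
  have h1 := tdn_quot_le_succ (k := k) p q f hq
  have hlt : p < q := by
    refine lt_of_le_of_ne (le_sup_left.trans hq.1.2) ?_
    rintro rfl
    exact hf (hq.1.2 (Ideal.mem_sup_right (Ideal.mem_span_singleton_self f)))
  have h2 := tdn_quot_lt (k := k) p q hlt
  omega

theorem dimGE_of_tdn {k : Type} [Field k] [IsAlgClosed k] {n : ℕ} (e : ℕ) :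
    ∀ (X : Set (ProjPt k n)), IsClosedSub X → IsIrredSub X →
    tdn k (MvPolynomial (Fin (n+1)) k ⧸ Iv X) = e + 1 → DimGE X e := by
  have : Infinite k := IsAlgClosed.instInfinite
  induction e with
  | zero =>
    intro X hX hi _
    exact ⟨fun _ => X, (by intro i j h; exact absurd h (by omega)), fun _ => ⟨subset_rfl, ⟨X, hX, by simp⟩, hi⟩⟩
  | succ e ih =>
    intro X hX hi ht
    have hP := Iv_isPrime hi
    have hnot := irrI_not_le_of_nonempty hi.1
    rw [irrI_le_iff] at hnot
    push Not at hnot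
    obtain ⟨j, hj⟩ := hnot
    have hle : Iv X ⊔ Ideal.span {(MvPolynomial.X j : MvPolynomial (Fin (n+1)) k)} ≤ irrI k n := by
      refine sup_le (Iv_lt_irrI hi.1).le ?_
      rw [Ideal.span_singleton_le_iff_mem]
      exact (irrI_le_iff (irrI k n)).1 le_rfl j
    have := irrI_maximal k n
    obtain ⟨q, hq, hqm⟩ := Ideal.exists_minimalPrimes_le hle
    have htq := tdn_section _ q _ hj hq
    have hqp := hq.1.1
    have hh : HomI (Iv X ⊔ Ideal.span {(MvPolynomial.X j : MvPolynomial (Fin (n+1)) k)}) := by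
      refine (Iv_homI X).sup (HomI.span _ ?_)
      rintro f rfl
      exact ⟨1, isHomogeneous_X _ _⟩
    have hqh : HomI q := hh.minimalPrime hq
    have hqi : ¬ irrI k n ≤ q := by
      intro h
      have := le_antisymm h hqm
      rw [← this, tdn_irrI] at htq
      omega
    have hIV := Iv_Vp hqh hqp hqi
    have hVcl := Vp_closed q
    have hVi : IsIrredSub (Vp q) := isIrredSub_of_prime (by rw [hIV]; exact hqp)
    have hVX : Vp q ⊆ X := closed_subset_of_Iv_le hX (by rw [hIV]; exact le_sup_left.trans hq.1.2)
    have hVne : Vp q < X := by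
      refine lt_of_le_not_ge hVX fun h => ?_
      have := Iv_anti h
      rw [hIV] at this
      exact hj (this (hq.1.2 (Ideal.mem_sup_right (Ideal.mem_span_singleton_self _))))
    obtain ⟨c, hc, hci⟩ := ih (Vp q) hVcl hVi (by rw [hIV]; omega)
    refine ⟨Fin.snoc (α := fun _ => Set (ProjPt k n)) c X, ?_, ?_⟩
    · rw [Fin.strictMono_iff_lt_succ]
      intro i
      induction i using Fin.lastCases with
      | last =>
        rw [Fin.succ_last, Fin.snoc_last, Fin.snoc_castSucc]
        exact lt_of_le_of_lt (hci _).1 hVne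
      | cast i =>
        rw [Fin.succ_castSucc, Fin.snoc_castSucc, Fin.snoc_castSucc]
        exact hc (Fin.castSucc_lt_succ)
    · intro i
      induction i using Fin.lastCases with
      | last =>
        rw [Fin.snoc_last]
        exact ⟨subset_rfl, ⟨X, hX, by simp⟩, hi⟩
      | cast i =>
        rw [Fin.snoc_castSucc]
        obtain ⟨h1, ⟨C, hC, e⟩, h3⟩ := hci i
        refine ⟨h1.trans hVX, ⟨C ∩ Vp q, hC.inter' hVcl, ?_⟩, h3⟩
        rw [e]
        ext x
        constructor
        · rintro ⟨a, b⟩; exact ⟨⟨a, b⟩, hVX b⟩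
        · rintro ⟨a, b⟩; exact a

theorem hasDim_of_tdn {k : Type} [Field k] [IsAlgClosed k] {n : ℕ} (e : ℕ)
    (X : Set (ProjPt k n)) (hX : IsClosedSub X) (hi : IsIrredSub X)
    (h : tdn k (MvPolynomial (Fin (n+1)) k ⧸ Iv X) = e + 1) : HasDim X e := by
  have : Infinite k := IsAlgClosed.instInfinite
  refine ⟨dimGE_of_tdn e X hX hi h, fun h' => ?_⟩
  have := h'.le_tdn hX hi
  omega

theorem tdn_of_hasDim {k : Type} [Field k] [IsAlgClosed k] {n : ℕ} (e : ℕ)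
    (X : Set (ProjPt k n)) (hX : IsClosedSub X) (hi : IsIrredSub X)
    (h : HasDim X e) : tdn k (MvPolynomial (Fin (n+1)) k ⧸ Iv X) = e + 1 := by
  have : Infinite k := IsAlgClosed.instInfinite
  have h1 := h.1.le_tdn hX hi
  by_contra hne
  obtain ⟨t, ht⟩ : ∃ t, tdn k (MvPolynomial (Fin (n+1)) k ⧸ Iv X) = t + 1 :=
    ⟨tdn k (MvPolynomial (Fin (n+1)) k ⧸ Iv X) - 1, by omega⟩
  obtain ⟨c, hc, hci⟩ := dimGE_of_tdn t X hX hi ht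
  apply h.2
  have hle : e + 1 + 1 ≤ t + 1 := by omega
  exact ⟨c ∘ Fin.castLE hle, hc.comp (Fin.strictMono_castLE hle), fun i => hci _⟩

theorem tdn_mvPoly {k : Type} [Field k] {n : ℕ} : tdn k (MvPolynomial (Fin n) k) = n := by
  simp [tdn, MvPolynomial.trdeg_of_isDomain]

theorem tdn_quot_le_n {k : Type} [Field k] {n : ℕ} (p : Ideal (MvPolynomial (Fin n) k)) [p.IsPrime] :
    tdn k (MvPolynomial (Fin n) k ⧸ p) ≤ n := by
  have := tdn_le_of_surjective (Ideal.Quotient.mkₐ k p) (Ideal.Quotient.mkₐ_surjective k p)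
  rwa [tdn_mvPoly] at this

noncomputable def linForm {k : Type} [Field k] {n : ℕ} :
    (Fin (n+1) → k) →ₗ[k] MvPolynomial (Fin (n+1)) k :=
  ∑ j, (LinearMap.toSpanSingleton k _ (X j)).comp (LinearMap.proj j)

theorem linForm_apply {k : Type} [Field k] {n : ℕ} (c : Fin (n+1) → k) :
    linForm c = ∑ j, c j • (X j : MvPolynomial (Fin (n+1)) k) := by
  simp [linForm]

theorem linForm_homog {k : Type} [Field k] {n : ℕ} (c : Fin (n+1) → k) :
    (linForm c).IsHomogeneous 1 := by
  rw [linForm_apply]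
  apply IsHomogeneous.sum
  intro j _
  rw [smul_eq_C_mul]
  exact (isHomogeneous_C_mul_X _ _)

theorem linForm_single {k : Type} [Field k] {n : ℕ} (j : Fin (n+1)) :
    linForm (Pi.single j (1:k)) = X j := by
  rw [linForm_apply, Finset.sum_eq_single j]
  · simp
  · intro b _ hb; simp [hb]
  · simp

theorem exists_linForm_avoid {k : Type} [Field k] [Infinite k] {n : ℕ}
    (s : Set (Ideal (MvPolynomial (Fin (n+1)) k))) (hs : s.Finite)
    (h : ∀ q ∈ s, ¬ irrI k n ≤ q) :
    ∃ l : MvPolynomial (Fin (n+1)) k, l.IsHomogeneous 1 ∧ ∀ q ∈ s, l ∉ q := by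
  have : Finite s := hs
  by_contra hcon
  push Not at hcon
  let p : s → Subspace k (Fin (n+1) → k) := fun q =>
    (Submodule.restrictScalars k q.1).comap linForm
  have hc : ⋃ i, (p i : Set (Fin (n+1) → k)) = Set.univ := by
    rw [Set.eq_univ_iff_forall]
    intro c
    obtain ⟨q, hq, hm⟩ := hcon (linForm c) (linForm_homog c)
    rw [Set.mem_iUnion]
    exact ⟨⟨q, hq⟩, hm⟩
  obtain ⟨q, hq⟩ := Subspace.exists_eq_top_of_iUnion_eq_univ hc
  apply h q.1 q.2
  rw [irrI_le_iff]
  intro j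
  have : (Pi.single j (1:k)) ∈ p q := by rw [hq]; trivial
  have h2 : linForm (Pi.single j (1:k)) ∈ q.1 := this
  rwa [linForm_single] at h2

theorem exists_linear_params {k : Type} [Field k] [Infinite k] {n : ℕ} (t : ℕ) :
    ∀ (K : Ideal (MvPolynomial (Fin (n+1)) k)), HomI K →
    (∀ q ∈ K.minimalPrimes, tdn k (MvPolynomial (Fin (n+1)) k ⧸ q) ≤ t) →
    ∃ l : Fin t → MvPolynomial (Fin (n+1)) k, (∀ i, (l i).IsHomogeneous 1) ∧
      irrI k n ≤ (K ⊔ Ideal.span (Set.range l)).radical ∧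
      ∀ q ∈ K.minimalPrimes, q ≠ irrI k n → ∀ i : Fin t, i.val = 0 → l i ∉ q := by
  have hmax := irrI_maximal k n
  have key : ∀ (K : Ideal (MvPolynomial (Fin (n+1)) k)), HomI K → ∀ q ∈ K.minimalPrimes,
      q ≠ irrI k n → q < irrI k n := fun K hK q hq hne =>
    lt_of_le_of_ne ((hK.minimalPrime hq).le_irrI hq.1.1.ne_top) hne
  induction t with
  | zero =>
    intro K hK ht
    refine ⟨Fin.elim0, fun i => i.elim0, ?_, fun q hq hne i => i.elim0⟩
    have : K ⊔ Ideal.span (Set.range (Fin.elim0 : Fin 0 → MvPolynomial (Fin (n+1)) k)) = K := by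
      simp
    rw [this, ← Ideal.sInf_minimalPrimes]
    refine le_sInf fun q hq => ?_
    by_contra hne
    have h1 := one_le_tdn_of_lt_irrI hq.1.1 (key K hK q hq (by rintro rfl; exact hne le_rfl))
    have := ht q hq
    omega
  | succ t ih =>
    intro K hK ht
    obtain ⟨l, hl, hlq⟩ := exists_linForm_avoid {q | q ∈ K.minimalPrimes ∧ q ≠ irrI k n}
      ((K.finite_minimalPrimes_of_isNoetherianRing).subset fun q hq => hq.1)
      (fun q hq => (key K hK q hq.1 hq.2).not_ge)
    have hK' : HomI (K ⊔ Ideal.span {l}) := hK.sup (HomI.span _ (by rintro f rfl; exact ⟨1, hl⟩))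
    obtain ⟨m, hm, hm2, -⟩ := ih (K ⊔ Ideal.span {l}) hK' (by
      intro q' hq'
      have := hq'.1.1
      obtain ⟨q, hq, hqq⟩ := Ideal.exists_minimalPrimes_le (le_sup_left.trans hq'.1.2)
      have := hq.1.1
      by_cases hne : q = irrI k n
      · subst hne
        have := hmax.eq_of_le hq'.1.1.ne_top hqq
        rw [← this, tdn_irrI]; omega
      · have hlt : q < q' := by
          refine lt_of_le_of_ne hqq ?_
          rintro rfl
          exact hlq q ⟨hq, hne⟩ (hq'.1.2 (Ideal.mem_sup_right (Ideal.mem_span_singleton_self l)))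
        have := tdn_quot_lt (k := k) q q' hlt
        have := ht q hq
        omega)
    refine ⟨Fin.cons l m, ?_, ?_, ?_⟩
    · intro i
      refine Fin.cases ?_ ?_ i
      · simpa using hl
      · intro i; simpa using hm i
    · rw [Fin.range_cons, Set.insert_eq, Ideal.span_union, ← sup_assoc]
      exact hm2
    · intro q hq hne i hi
      have : i = 0 := Fin.ext hi
      subst this
      simpa using hlq q ⟨hq, hne⟩

theorem homComp_mul_left {k : Type} [Field k] {σ : Type} {Y : MvPolynomial σ k} {a : ℕ}
    (hY : Y.IsHomogeneous a) (c : MvPolynomial σ k) (D : ℕ) :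
    homogeneousComponent D (Y * c) =
      if a ≤ D then Y * homogeneousComponent (D - a) c else 0 := by
  conv_lhs => rw [← sum_homogeneousComponent c]
  rw [Finset.mul_sum, map_sum]
  have h1 : ∀ i, homogeneousComponent D (Y * homogeneousComponent i c) =
      if a + i = D then Y * homogeneousComponent i c else 0 := fun i => by
    rw [homogeneousComponent_of_mem (m := D) (n := a + i)
      (hY.mul (homogeneousComponent_isHomogeneous i c))]
    simp [eq_comm]
  simp only [h1]
  split_ifs with h
  · by_cases hlt : D - a < c.totalDegree + 1
    · rw [Finset.sum_eq_single (D - a)]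
      · rw [if_pos (by omega)]
      · intro b _ hb; rw [if_neg (by omega)]
      · intro h'; exact absurd (Finset.mem_range.2 hlt) h'
    · rw [homogeneousComponent_eq_zero _ _ (by omega), mul_zero]
      apply Finset.sum_eq_zero
      intro i hi
      rw [Finset.mem_range] at hi
      rw [if_neg (by omega)]
  · apply Finset.sum_eq_zero
    intro i _
    rw [if_neg (by omega)]

theorem homog_mem_irrI_pow {k : Type} [Field k] {n : ℕ} {f : MvPolynomial (Fin (n+1)) k} {D M : ℕ}
    (hf : f.IsHomogeneous D) (h : M ≤ D) : f ∈ irrI k n ^ M := by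
  have : irrI k n = idealOfVars (Fin (n+1)) k := by rw [irrI_eq]
  rw [this, mem_pow_idealOfVars_iff]
  intro x hx
  have := hf (mem_support_iff.mp hx)
  rw [Finsupp.weight_apply] at this
  rw [← this] at h
  rw [Finsupp.degree_apply]
  simpa [Finsupp.sum] using h

noncomputable def genMon (k : Type) [Field k] (n M : ℕ) (g : Fin (n+1) → Fin M) :
    MvPolynomial (Fin (n+1)) k := monomial (Finsupp.equivFunOnFinite.symm fun j => (g j : ℕ)) 1

theorem low_degree_rep {k : Type} [Field k] {n M D r : ℕ} (hD : D < M)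
    {f : MvPolynomial (Fin (n+1)) k} (hf : f.IsHomogeneous D)
    (Y : Fin r → MvPolynomial (Fin (n+1)) k) :
    ∃ b : (Fin (n+1) → Fin M) → MvPolynomial (Fin r) k,
      f = ∑ g, aeval Y (b g) * genMon k n M g ∧ ∀ g, (b g).totalDegree = 0 := by
  classical
  refine ⟨fun g => C (coeff (Finsupp.equivFunOnFinite.symm fun j => (g j : ℕ)) f), ?_, fun g => by simp⟩
  ext u
  rw [coeff_sum]
  simp only [aeval_C, genMon]
  by_cases hu : ∃ g : Fin (n+1) → Fin M, u = Finsupp.equivFunOnFinite.symm fun j => (g j : ℕ)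
  · obtain ⟨g, rfl⟩ := hu
    rw [Finset.sum_eq_single g]
    · simp [MvPolynomial.algebraMap_eq, coeff_C_mul]
    · intro g' _ hg'
      rw [MvPolynomial.algebraMap_eq, coeff_C_mul, coeff_monomial, if_neg, mul_zero]
      intro h
      apply hg'
      have := Finsupp.equivFunOnFinite.symm.injective h
      funext j
      exact Fin.ext (congrFun this j)
    · simp
  · rw [Finset.sum_eq_zero]
    · by_contra hne
      apply hu
      have hs := homog_sum_eq hf (mem_support_iff.2 hne)
      refine ⟨fun j => ⟨u j, ?_⟩, ?_⟩
      · have := Finset.single_le_sum (f := fun j => u j) (fun i _ => Nat.zero_le _) (Finset.mem_univ j)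
        omega
      · ext j; simp
    · intro g _
      rw [MvPolynomial.algebraMap_eq, coeff_C_mul, coeff_monomial, if_neg, mul_zero]
      intro h; exact hu ⟨g, h.symm⟩

theorem homog_rep {k : Type} [Field k] {n M r a : ℕ} (ha : 1 ≤ a)
    {I : Ideal (MvPolynomial (Fin (n+1)) k)} (hI : HomI I)
    (Y : Fin r → MvPolynomial (Fin (n+1)) k) (hY : ∀ i, (Y i).IsHomogeneous a)
    (hM : irrI k n ^ M ≤ I ⊔ Ideal.span (Set.range Y)) (D : ℕ) :
    ∀ f : MvPolynomial (Fin (n+1)) k, f.IsHomogeneous D →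
    ∃ b : (Fin (n+1) → Fin M) → MvPolynomial (Fin r) k,
      f - ∑ g, aeval Y (b g) * genMon k n M g ∈ I ∧ ∀ g, a * (b g).totalDegree ≤ D := by
  induction D using Nat.strong_induction_on with
  | _ D ih =>
  intro f hf
  by_cases hDM : D < M
  · obtain ⟨b, hb, hb0⟩ := low_degree_rep hDM hf Y
    exact ⟨b, by rw [← hb]; simp, fun g => by rw [hb0 g]; omega⟩
  have hm := hM (homog_mem_irrI_pow hf (not_lt.1 hDM))
  obtain ⟨i, hi, s, hs, his⟩ := Submodule.mem_sup.1 hm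
  obtain ⟨c, hc⟩ := Ideal.mem_span_range_iff_exists_fun.1 hs
  have hfD : f = homogeneousComponent D i + ∑ j, homogeneousComponent D (Y j * c j) := by
    rw [← map_sum, ← map_add]
    have : ∑ j, Y j * c j = s := by rw [← hc]; exact Finset.sum_congr rfl fun j _ => mul_comm _ _
    rw [this, his, homogeneousComponent_of_mem (m := D) (n := D) hf, if_pos rfl]
  by_cases haD : a ≤ D
  · have hfD' : f = homogeneousComponent D i + ∑ j, Y j * homogeneousComponent (D - a) (c j) := by
      rw [hfD]
      congr 1
      exact Finset.sum_congr rfl fun j _ => by rw [homComp_mul_left (hY j), if_pos haD]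
    choose b hb hbd using fun j => ih (D - a) (by omega) _
      (homogeneousComponent_isHomogeneous (D - a) (c j))
    refine ⟨fun g => ∑ j, X j * b j g, ?_, ?_⟩
    · have : f - ∑ g, aeval Y (∑ j, X j * b j g) * genMon k n M g =
          homogeneousComponent D i + ∑ j, Y j * (homogeneousComponent (D - a) (c j) -
            ∑ g, aeval Y (b j g) * genMon k n M g) := by
        conv_lhs => rw [hfD']
        simp only [map_sum, map_mul, aeval_X, mul_sub, Finset.sum_sub_distrib, Finset.sum_mul,
          Finset.mul_sum]
        rw [Finset.sum_comm (s := Finset.univ (α := Fin (n+1) → Fin M))]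
        simp only [mul_assoc]
        ring
      rw [this]
      exact I.add_mem (hI i hi D) (I.sum_mem fun j _ => I.mul_mem_left _ (hb j))
    · intro g
      have : (∑ j, X j * b j g).totalDegree ≤ D / a := by
        apply totalDegree_finsetSum_le
        intro j _
        refine (totalDegree_mul _ _).trans ?_
        rw [totalDegree_X, Nat.le_div_iff_mul_le (by omega)]
        have := hbd j g
        rw [mul_comm, mul_add]
        omega
      calc _ ≤ a * (D / a) := Nat.mul_le_mul_left _ this
        _ ≤ D := Nat.mul_div_le D a
  · refine ⟨fun _ => 0, ?_, fun g => by simp⟩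
    have : f = homogeneousComponent D i := by
      rw [hfD, Finset.sum_eq_zero, add_zero]
      intro j _
      rw [homComp_mul_left (hY j), if_neg haD]
    simp only [map_zero, zero_mul, Finset.sum_const_zero, sub_zero]
    rw [this]; exact hI i hi D

theorem trunc_exists {k : Type} [Field k] {σ : Type} (i : σ) (m : ℕ) (hm : 0 < m)
    (a : MvPolynomial σ k) : ∃ a' a'' : MvPolynomial σ k, a = a' + X i ^ m * a'' ∧
      degreeOf i a' < m ∧ a'.totalDegree ≤ a.totalDegree := by
  classical
  refine ⟨modMonomial a (Finsupp.single i m), divMonomial a (Finsupp.single i m), ?_, ?_, ?_⟩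
  · rw [X_pow_eq_monomial, modMonomial_add_divMonomial]
  · rw [degreeOf_lt_iff hm]
    intro u hu
    rw [mem_support_iff] at hu
    by_contra hle
    apply hu
    apply coeff_modMonomial_of_le
    rw [Finsupp.single_le_iff]
    omega
  · apply totalDegree_le_of_support_subset
    intro u hu
    rw [mem_support_iff] at hu ⊢
    by_cases h : Finsupp.single i m ≤ u
    · exact absurd (coeff_modMonomial_of_le a h) hu
    · rwa [coeff_modMonomial_of_not_le a h] at hu

theorem eq_zero_of_X_pow_dvd {k : Type} [Field k] {σ : Type} (i : σ) (m : ℕ)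
    (b : MvPolynomial σ k) (h : X i ^ m ∣ b) (hd : degreeOf i b < m) : b = 0 := by
  classical
  obtain ⟨c, rfl⟩ := h
  by_contra hne
  have hc : c ≠ 0 := right_ne_zero_of_mul hne
  rw [degreeOf_mul_eq (pow_ne_zero _ (X_ne_zero i)) hc, degreeOf_pow_eq _ _ _ (X_ne_zero i),
    degreeOf_X_self] at hd
  omega

theorem X_not_dvd_X_pow {k : Type} [Field k] {σ : Type} {i j : σ} (h : i ≠ j) (N : ℕ) :
    ¬ (X i : MvPolynomial σ k) ∣ X j ^ N := by
  intro hd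
  have := (MvPolynomial.X_prime (R := k) (i := i)).dvd_of_dvd_pow hd
  rw [X_dvd_X] at this
  exact h this

theorem degreeOf_mul_X_pow_other {k : Type} [Field k] {σ : Type} {i j : σ} (h : i ≠ j) (N : ℕ)
    (b : MvPolynomial σ k) : degreeOf i (b * X j ^ N) ≤ degreeOf i b := by
  classical
  refine (degreeOf_mul_le _ _ _).trans ?_
  have : degreeOf i ((X j : MvPolynomial σ k) ^ N) = 0 := by
    have h1 := degreeOf_pow_le i (X j : MvPolynomial σ k) N
    rw [degreeOf_X, if_neg h] at h1
    omega
  omega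

/-- Division step: if `a₁ y₂^N ≡ a₂ y₁^N` modulo `y₀^m`. -/
theorem coprime_step {k : Type} [Field k] {σ : Type} {i0 i1 i2 : σ} (h01 : i0 ≠ i1) (h02 : i0 ≠ i2)
    (h12 : i1 ≠ i2) (m N : ℕ) (hm : 0 < m) (a1 a2 : MvPolynomial σ k)
    (h : X i0 ^ m ∣ a1 * X i2 ^ N - a2 * X i1 ^ N) :
    ∃ al c1 : MvPolynomial σ k, a1 = X i1 ^ N * al + X i0 ^ m * c1 ∧
      al.totalDegree + N ≤ a1.totalDegree + N ∧ al.totalDegree ≤ a1.totalDegree - N := by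
  classical
  obtain ⟨a1', c1, e1, d1, t1⟩ := trunc_exists i0 m hm a1
  obtain ⟨a2', c2, e2, d2, t2⟩ := trunc_exists i0 m hm a2
  have hz : a1' * X i2 ^ N - a2' * X i1 ^ N = 0 := by
    apply eq_zero_of_X_pow_dvd i0 m
    · have : a1' * X i2 ^ N - a2' * X i1 ^ N =
          (a1 * X i2 ^ N - a2 * X i1 ^ N) - X i0 ^ m * (c1 * X i2 ^ N - c2 * X i1 ^ N) := by
        rw [e1, e2]; ring
      rw [this]
      exact dvd_sub h (dvd_mul_right _ _)
    · have h1 := degreeOf_mul_X_pow_other h02 N a1'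
      have h2 := degreeOf_mul_X_pow_other h01 N a2'
      have h3 := degreeOf_sub_le i0 (a1' * X i2 ^ N) (a2' * X i1 ^ N)
      omega
  have hdvd : X i1 ^ N ∣ a1' := by
    apply (MvPolynomial.X_prime (R := k) (i := i1)).pow_dvd_of_dvd_mul_right N (X_not_dvd_X_pow h12 N)
    rw [sub_eq_zero.1 hz]
    exact dvd_mul_left _ _
  obtain ⟨al, hal⟩ := hdvd
  have htd : al.totalDegree ≤ a1.totalDegree - N := by
    by_cases h0 : al = 0
    · simp [h0]
    · have := totalDegree_mul_of_isDomain (pow_ne_zero N (X_ne_zero (R := k) i1)) h0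
      rw [← hal, totalDegree_X_pow] at this
      omega
  refine ⟨al, c1, by rw [← hal]; exact e1, by omega, htd⟩

/-- Generic freeness with degree control. -/
theorem generic_free {k : Type} [Field k] {σ : Type} {S : Type} [CommRing S] [IsDomain S]
    [Algebra (MvPolynomial σ k) S] {G : Type} [Fintype G] (e : G → S) :
    ∃ (L : Type) (_ : Fintype L) (w : L → S) (p : MvPolynomial σ k) (C : ℕ), p ≠ 0 ∧
      LinearIndependent (MvPolynomial σ k) w ∧
      ∀ (N : ℕ) (b : G → MvPolynomial σ k), (∀ g, (b g).totalDegree ≤ N) →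
        ∃ c : L → MvPolynomial σ k, p • (∑ g, b g • e g) = ∑ l, c l • w l ∧
          ∀ l, (c l).totalDegree ≤ N + C := by
  classical
  obtain ⟨s, hs, hmax⟩ := exists_maximal_linearIndepOn (MvPolynomial σ k) e
  have hfin : Fintype s := Fintype.ofFinite s
  have h1 : ∀ g, ∃ a : MvPolynomial σ k, a ≠ 0 ∧ ∃ c : s → MvPolynomial σ k,
      a • e g = ∑ l : s, c l • e l := by
    intro g
    have key : ∃ a : MvPolynomial σ k, a ≠ 0 ∧
        a • e g ∈ Submodule.span (MvPolynomial σ k) (Set.range fun l : s => e l) := by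
      by_cases hg : g ∈ s
      · exact ⟨1, one_ne_zero, by
          rw [one_smul]; exact Submodule.subset_span ⟨⟨g, hg⟩, rfl⟩⟩
      · obtain ⟨a, ha, hm⟩ := hmax g hg
        refine ⟨a, ha, ?_⟩
        rw [Set.image_eq_range] at hm
        exact hm
    obtain ⟨a, ha, hm⟩ := key
    rw [Submodule.mem_span_range_iff_exists_fun] at hm
    obtain ⟨c, hc⟩ := hm
    exact ⟨a, ha, c, hc.symm⟩
  choose a ha c hc using h1
  let p := ∏ g, a g
  have hp : p ≠ 0 := Finset.prod_ne_zero_iff.2 fun g _ => ha g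
  have h2 : ∀ g, ∃ c : s → MvPolynomial σ k, p • e g = ∑ l : s, c l • e l := by
    intro g
    obtain ⟨u, hu⟩ := Finset.dvd_prod_of_mem a (Finset.mem_univ g)
    refine ⟨fun l => u * c g l, ?_⟩
    show (∏ g, a g) • e g = _
    rw [hu, mul_comm, mul_smul, hc, Finset.smul_sum]
    simp only [mul_smul]
  choose c' hc' using h2
  refine ⟨s, hfin, fun l => e l, p, Finset.univ.sup fun g => Finset.univ.sup fun l =>
    (c' g l).totalDegree, hp, hs, ?_⟩
  intro N b hb
  refine ⟨fun l => ∑ g, b g * c' g l, ?_, ?_⟩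
  · rw [Finset.smul_sum]
    simp only [Finset.sum_smul]
    rw [Finset.sum_comm]
    refine Finset.sum_congr rfl fun g _ => ?_
    rw [smul_comm, hc', Finset.smul_sum]
    simp only [mul_smul]
  · intro l
    apply totalDegree_finsetSum_le
    intro g _
    refine (totalDegree_mul _ _).trans (add_le_add (hb g) ?_)
    exact (Finset.le_sup (f := fun l => (c' g l).totalDegree) (Finset.mem_univ l)).trans
      (Finset.le_sup (f := fun g => Finset.univ.sup fun l => (c' g l).totalDegree)
        (Finset.mem_univ g))

theorem indep_coeff_dvd {P S L : Type} [CommRing P] [CommRing S] [Algebra P S] [Fintype L]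
    {w : L → S} (hw : LinearIndependent P w) {a b : L → P} {y : P}
    (h : ∑ l, a l • w l = y • ∑ l, b l • w l) (l : L) : y ∣ a l := by
  rw [Fintype.linearIndependent_iff] at hw
  have := hw (fun l => a l - y * b l) (by
    simp only [sub_smul, Finset.sum_sub_distrib, mul_smul]
    rw [h, Finset.smul_sum, sub_self]) l
  exact ⟨b l, sub_eq_zero.1 this⟩

theorem core_lemma {k : Type} [Field k] {σ : Type} {i0 i1 i2 : σ} (h01 : i0 ≠ i1) (h02 : i0 ≠ i2)
    (h12 : i1 ≠ i2) {S : Type} [CommRing S] [IsDomain S] [Algebra (MvPolynomial σ k) S]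
    (hinj : Function.Injective (algebraMap (MvPolynomial σ k) S))
    {G : Type} [Fintype G] (e : G → S)
    (hspan : ∀ f : S, ∃ b : G → MvPolynomial σ k, f = ∑ g, b g • e g) :
    ∃ p : MvPolynomial σ k, p ≠ 0 ∧ ∃ m0 : ℕ, ∀ m, m0 ≤ m → ∀ (N : ℕ) (f1 g1 f2 g2 : S),
      (∃ b : G → MvPolynomial σ k, f1 = ∑ g, b g • e g ∧ ∀ g, (b g).totalDegree ≤ N) →
      (∃ b : G → MvPolynomial σ k, f2 = ∑ g, b g • e g ∧ ∀ g, (b g).totalDegree ≤ N) →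
      f1 + g1 = algebraMap (MvPolynomial σ k) S (X i1) ^ N →
      f2 + g2 = algebraMap (MvPolynomial σ k) S (X i2) ^ N →
      algebraMap (MvPolynomial σ k) S (X i0) ^ m ∣ f1 * g2 - f2 * g1 →
      algebraMap (MvPolynomial σ k) S (X i0) ^ m ∣ f1 * g1 →
      algebraMap (MvPolynomial σ k) S (X i0) ^ m ∣ algebraMap (MvPolynomial σ k) S p * f1 ∨
      algebraMap (MvPolynomial σ k) S (X i0) ^ m ∣ algebraMap (MvPolynomial σ k) S p * g1 := by
  classical
  obtain ⟨L, hL, w, p, C, hp, hw, hrep⟩ := generic_free (k := k) (σ := σ) e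
  have hall : ∀ f : S, ∃ N : ℕ, ∃ b : G → MvPolynomial σ k, f = ∑ g, b g • e g ∧
      ∀ g, (b g).totalDegree ≤ N := by
    intro f
    obtain ⟨b, hb⟩ := hspan f
    exact ⟨Finset.univ.sup fun g => (b g).totalDegree, b, hb, fun g =>
      Finset.le_sup (f := fun g => (b g).totalDegree) (Finset.mem_univ g)⟩
  have hF : ∀ f : S, ∃ c : L → MvPolynomial σ k, p • f = ∑ l, c l • w l := by
    intro f
    obtain ⟨N, b, hb, hd⟩ := hall f
    obtain ⟨c, hc, -⟩ := hrep N b hd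
    exact ⟨c, by rw [hb, hc]⟩
  choose cw hcw using fun (l l' : L) => hF (w l * w l')
  let C2 : ℕ := Finset.univ.sup fun l => Finset.univ.sup fun l' => Finset.univ.sup fun j =>
    (cw l l' j).totalDegree
  have hC2 : ∀ l l' j, (cw l l' j).totalDegree ≤ C2 := fun l l' j =>
    (Finset.le_sup (f := fun j => (cw l l' j).totalDegree) (Finset.mem_univ j)).trans <|
    (Finset.le_sup (f := fun l' => Finset.univ.sup fun j => (cw l l' j).totalDegree)
      (Finset.mem_univ l')).trans <|
    (Finset.le_sup (f := fun l => Finset.univ.sup fun l' => Finset.univ.sup fun j =>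
      (cw l l' j).totalDegree) (Finset.mem_univ l))
  refine ⟨p, hp, 2 * p.totalDegree + C + (2 * C + C2) + 1, ?_⟩
  rintro m hm N f1 g1 f2 g2 ⟨b1, hb1, hd1⟩ ⟨b2, hb2, hd2⟩ hs1 hs2 ⟨u, hu⟩ ⟨v, hv⟩
  obtain ⟨a1, ha1, ht1⟩ := hrep N b1 hd1
  obtain ⟨a2, ha2, ht2⟩ := hrep N b2 hd2
  rw [← hb1] at ha1
  rw [← hb2] at ha2
  obtain ⟨cu, hcu⟩ := hF u
  set y := algebraMap (MvPolynomial σ k) S with hy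
  have hsm : ∀ (c : MvPolynomial σ k) (s : S), c • s = y c * s := fun c s => Algebra.smul_def c s
  have hdvd : ∀ l, X i0 ^ m ∣ a1 l * X i2 ^ N - a2 l * X i1 ^ N := by
    intro l
    refine indep_coeff_dvd hw (a := fun l => a1 l * X i2 ^ N - a2 l * X i1 ^ N) (b := cu) ?_ l
    rw [← hcu]
    have e1 : ∑ l, (a1 l * X i2 ^ N - a2 l * X i1 ^ N) • w l =
        (X i2 ^ N : MvPolynomial σ k) • (∑ l, a1 l • w l) -
        (X i1 ^ N : MvPolynomial σ k) • (∑ l, a2 l • w l) := by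
      simp only [sub_smul, Finset.sum_sub_distrib, Finset.smul_sum, mul_comm (a1 _), mul_comm (a2 _),
        mul_smul]
    rw [e1, ← ha1, ← ha2]
    simp only [hsm, map_pow]
    rw [← hs1, ← hs2]
    have : y (X i0) ^ m * (y p * u) = y p * (y (X i0) ^ m * u) := by ring
    rw [this, ← hu]
    ring
  have hm0 : 0 < m := by omega
  choose al c1 hal _ htal using fun l => coprime_step h01 h02 h12 m N hm0 (a1 l) (a2 l) (hdvd l)
  have htal' : ∀ l, (al l).totalDegree ≤ C := fun l => by
    have := htal l
    have := ht1 l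
    omega
  let q : S := ∑ l, al l • w l
  let r : S := ∑ l, c1 l • w l
  have hpf1 : y p * f1 = y (X i1) ^ N * q + y (X i0) ^ m * r := by
    rw [← hsm, ha1]
    simp only [q, r, Finset.mul_sum]
    rw [← Finset.sum_add_distrib]
    refine Finset.sum_congr rfl fun l _ => ?_
    conv_lhs => rw [hal l]
    simp only [hsm, map_add, map_mul, map_pow]
    ring
  have hpg1 : y p * g1 = y (X i1) ^ N * (y p - q) - y (X i0) ^ m * r := by
    have : g1 = y (X i1) ^ N - f1 := by rw [← hs1]; ring
    rw [this, mul_sub, hpf1]; ring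
  -- the key vanishing
  let be : L → MvPolynomial σ k := fun j => p * p * al j - ∑ l, ∑ l', al l * al l' * cw l l' j
  have hbe : ∑ j, be j • w j = y p * (q * (y p - q)) := by
    have e1 : y p * (q * (y p - q)) = y p * y p * q - y p * (q * q) := by ring
    have e2 : y p * (q * q) = ∑ j, (∑ l, ∑ l', al l * al l' * cw l l' j) • w j := by
      have e3 : ∀ l l', y p * (al l • w l * al l' • w l') = ∑ j, (al l * al l' * cw l l' j) • w j := by
        intro l l'
        have : y p * (al l • w l * al l' • w l') = (al l * al l') • (p • (w l * w l')) := by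
          simp only [hsm, map_mul]; ring
        rw [this, hcw, Finset.smul_sum]
        simp only [mul_smul]
      have e4 : q * q = ∑ l, ∑ l', al l • w l * al l' • w l' := Finset.sum_mul_sum _ _ _ _
      rw [e4]
      simp only [Finset.mul_sum, e3, Finset.sum_smul]
      conv_rhs => rw [Finset.sum_comm]
      refine Finset.sum_congr rfl fun l _ => ?_
      rw [Finset.sum_comm]
    rw [e1, e2]
    simp only [be, sub_smul, Finset.sum_sub_distrib]
    congr 1
    simp only [q, Finset.mul_sum]
    refine Finset.sum_congr rfl fun l _ => ?_
    simp only [hsm, map_mul]; ring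
  have hbed : ∀ j, (be j).totalDegree < m := by
    intro j
    have h1 : (p * p * al j).totalDegree ≤ 2 * p.totalDegree + C := by
      have := totalDegree_mul (p * p) (al j)
      have := totalDegree_mul p p
      have := htal' j
      omega
    have h2 : (∑ l, ∑ l', al l * al l' * cw l l' j).totalDegree ≤ 2 * C + C2 := by
      apply totalDegree_finsetSum_le
      intro l _
      apply totalDegree_finsetSum_le
      intro l' _
      have := totalDegree_mul (al l * al l') (cw l l' j)
      have := totalDegree_mul (al l) (al l')
      have := htal' l
      have := htal' l'
      have := hC2 l l' j
      omega
    have := totalDegree_sub (p * p * al j) (∑ l, ∑ l', al l * al l' * cw l l' j)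
    simp only [be]
    omega
  have hbe0 : ∀ j, be j = 0 := by
    obtain ⟨cz, hcz⟩ := hF (y p * y p * v - r * (y (X i1) ^ N * (y p - q)) +
      r * (y (X i1) ^ N * q) + y (X i0) ^ m * r * r)
    have hd : ∀ j, X i0 ^ m ∣ be j * X i1 ^ (2 * N) := by
      intro j
      apply indep_coeff_dvd hw (b := cz) (a := fun j => be j * X i1 ^ (2 * N))
      rw [← hcz]
      have : ∑ l, (be l * X i1 ^ (2 * N)) • w l = (X i1 ^ (2 * N) : MvPolynomial σ k) • ∑ l, be l • w l := by
        simp only [Finset.smul_sum, mul_comm (be _), mul_smul]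
      rw [this, hbe]
      simp only [hsm, map_pow]
      have h3 : (y p * f1) * (y p * g1) = y p * y p * (y (X i0) ^ m * v) := by rw [← hv]; ring
      rw [hpf1, hpg1] at h3
      linear_combination (y p) * h3
    intro j
    have hd' : X i0 ^ m ∣ be j :=
      (MvPolynomial.X_prime (R := k) (i := i0)).pow_dvd_of_dvd_mul_right m (X_not_dvd_X_pow h01 _) (hd j)
    apply eq_zero_of_X_pow_dvd i0 m _ hd'
    exact (degreeOf_le_totalDegree _ _).trans_lt (hbed j)
  have hz : y p * (q * (y p - q)) = 0 := by
    rw [← hbe]; simp [hbe0]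
  have hyp : y p ≠ 0 := by
    rw [Ne, map_eq_zero_iff _ hinj]; exact hp
  rcases mul_eq_zero.1 ((mul_eq_zero.1 hz).resolve_left hyp) with h | h
  · left
    rw [hpf1, h, mul_zero, zero_add]
    exact dvd_mul_right _ _
  · right
    rw [hpg1, h, mul_zero, zero_sub]
    exact (dvd_neg).2 (dvd_mul_right _ _)

theorem core_lemma' {k : Type} [Field k] {σ : Type} {i0 i1 i2 : σ} (h01 : i0 ≠ i1) (h02 : i0 ≠ i2)
    (h12 : i1 ≠ i2) {S : Type} [CommRing S] [IsDomain S] (y : MvPolynomial σ k →+* S)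
    (hinj : Function.Injective y)
    {G : Type} [Fintype G] (e : G → S)
    (hspan : ∀ f : S, ∃ b : G → MvPolynomial σ k, f = ∑ g, y (b g) * e g) :
    ∃ p : MvPolynomial σ k, p ≠ 0 ∧ ∃ m0 : ℕ, ∀ m, m0 ≤ m → ∀ (N : ℕ) (f1 g1 f2 g2 : S),
      (∃ b : G → MvPolynomial σ k, f1 = ∑ g, y (b g) * e g ∧ ∀ g, (b g).totalDegree ≤ N) →
      (∃ b : G → MvPolynomial σ k, f2 = ∑ g, y (b g) * e g ∧ ∀ g, (b g).totalDegree ≤ N) →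
      f1 + g1 = y (X i1) ^ N → f2 + g2 = y (X i2) ^ N →
      y (X i0) ^ m ∣ f1 * g2 - f2 * g1 → y (X i0) ^ m ∣ f1 * g1 →
      y (X i0) ^ m ∣ y p * f1 ∨ y (X i0) ^ m ∣ y p * g1 := by
  letI := y.toAlgebra
  exact core_lemma h01 h02 h12 hinj e hspan

theorem krull_avoid {S : Type} [CommRing S] [IsDomain S] [IsNoetherianRing S] (Q : Ideal S)
    [Q.IsPrime] (h p : S) (hh : h ∈ Q) (hp : p ≠ 0) :
    ∃ m1 : ℕ, ∀ m, m1 ≤ m → ∀ s, s ∉ Q → ¬ h ^ m ∣ p * s := by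
  let B := Localization.AtPrime Q
  have hne : algebraMap S B p ≠ 0 := by
    rw [Ne, map_eq_zero_iff _ (IsLocalization.injective B Q.primeCompl_le_nonZeroDivisors)]
    exact hp
  have hbot := Ideal.iInf_pow_eq_bot_of_isLocalRing (IsLocalRing.maximalIdeal B)
    (IsLocalRing.maximalIdeal.isMaximal B).ne_top
  have : ∃ m1, algebraMap S B p ∉ IsLocalRing.maximalIdeal B ^ m1 := by
    by_contra hcon
    push Not at hcon
    have : algebraMap S B p ∈ (⊥ : Ideal B) := by
      rw [← hbot, Ideal.mem_iInf]; exact hcon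
    exact hne this
  obtain ⟨m1, hm1⟩ := this
  refine ⟨m1, fun m hm s hs hd => hm1 ?_⟩
  obtain ⟨c, hc⟩ := hd
  have hu : IsUnit (algebraMap S B s) := IsLocalization.map_units B (⟨s, hs⟩ : Q.primeCompl)
  have hmem : algebraMap S B p * algebraMap S B s ∈ IsLocalRing.maximalIdeal B ^ m := by
    rw [← map_mul, hc, map_mul, map_pow]
    apply Ideal.mul_mem_right
    apply Ideal.pow_mem_pow
    exact (IsLocalization.AtPrime.to_map_mem_maximal_iff B Q h).2 hh
  rw [Ideal.mul_unit_mem_iff_mem _ hu] at hmem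
  exact Ideal.pow_le_pow_right hm hmem

theorem param_injective {k : Type} [Field k] {S : Type} [CommRing S] [IsDomain S] [Algebra k S]
    [Algebra.FiniteType k S] {r : ℕ} (ht : tdn k S = r) (x : Fin r → S) {G : Type} [Fintype G]
    (e : G → S) (hspan : ∀ f : S, ∃ b : G → MvPolynomial (Fin r) k, f = ∑ g, aeval x (b g) * e g) :
    Function.Injective (aeval x : MvPolynomial (Fin r) k →ₐ[k] S) := by
  classical
  have hfin : Module.Finite (Algebra.adjoin k (Set.range x)) S := by
    refine ⟨⟨Finset.univ.image e, ?_⟩⟩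
    rw [eq_top_iff]
    intro f _
    obtain ⟨b, hb⟩ := hspan f
    rw [hb]
    refine Submodule.sum_mem _ fun g _ => ?_
    have hm : aeval x (b g) ∈ Algebra.adjoin k (Set.range x) := by
      rw [Algebra.adjoin_range_eq_range_aeval]; exact ⟨_, rfl⟩
    exact Submodule.smul_mem _ (⟨_, hm⟩ : Algebra.adjoin k (Set.range x))
      (Submodule.subset_span (by simp))
  have hintegral : Algebra.IsIntegral (Algebra.adjoin k (Set.range x)) S := inferInstance
  have halg : Algebra.IsAlgebraic (Algebra.adjoin k (Set.range x)) S := inferInstance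
  have := Algebra.IsAlgebraic.isTranscendenceBasis_of_le_trdeg_of_finite k x (by
    rw [← tdn_cast k S, ht]; simp)
  exact this.1

theorem connected_section {k : Type} [Field k] [Infinite k] {n d a : ℕ} (ha : 1 ≤ a) (hd : 2 ≤ d)
    {I : Ideal (MvPolynomial (Fin (n+1)) k)} (hI : HomI I) (hp : I.IsPrime)
    (ht : tdn k (MvPolynomial (Fin (n+1)) k ⧸ I) = d + 1)
    (h : MvPolynomial (Fin (n+1)) k) (hh : h.IsHomogeneous a) (hhI : h ∉ I)
    (I1 I2 : Ideal (MvPolynomial (Fin (n+1)) k)) (h1 : HomI I1) (h2 : HomI I2)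
    (hprod : I1 * I2 ≤ (I ⊔ Ideal.span {h}).radical) (hirr : irrI k n ≤ (I1 ⊔ I2).radical)
    (q1 q2 : Ideal (MvPolynomial (Fin (n+1)) k))
    (hq1 : q1 ∈ (I ⊔ Ideal.span {h}).minimalPrimes)
    (hq2 : q2 ∈ (I ⊔ Ideal.span {h}).minimalPrimes) (h11 : I1 ≤ q1) (h22 : I2 ≤ q2) : False := by
  classical
  have htd : ∀ q ∈ (I ⊔ Ideal.span {h}).minimalPrimes,
      tdn k (MvPolynomial (Fin (n+1)) k ⧸ q) = d := by
    intro q hq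
    have := tdn_section I q h hhI hq
    omega
  have hKh : HomI (I ⊔ Ideal.span {h}) :=
    hI.sup (HomI.span _ (by rintro f rfl; exact ⟨a, hh⟩))
  obtain ⟨l, hl, hlirr, hlq⟩ := exists_linear_params d _ hKh (fun q hq => (htd q hq).le)
  let Y : Fin (d+1) → MvPolynomial (Fin (n+1)) k := Fin.cons h fun i => l i ^ a
  have hYh : ∀ i, (Y i).IsHomogeneous a := by
    intro i
    refine Fin.cases ?_ (fun i => ?_) i
    · exact hh
    · show (l i ^ a).IsHomogeneous a
      simpa using (hl i).pow a
  have hrad : irrI k n ≤ (I ⊔ Ideal.span (Set.range Y)).radical := by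
    refine hlirr.trans (Ideal.radical_le_radical_iff.2 (sup_le (sup_le ?_ ?_) ?_))
    · exact le_sup_left.trans Ideal.le_radical
    · rw [Ideal.span_singleton_le_iff_mem]
      exact Ideal.le_radical (Ideal.mem_sup_right (Ideal.subset_span ⟨0, rfl⟩))
    · rw [Ideal.span_le]
      rintro _ ⟨i, rfl⟩
      exact ⟨a, Ideal.mem_sup_right (Ideal.subset_span ⟨i.succ, rfl⟩)⟩
  obtain ⟨M, hM⟩ := Ideal.exists_pow_le_of_le_radical_of_fg hrad (IsNoetherian.noetherian _)
  let S := MvPolynomial (Fin (n+1)) k ⧸ I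
  let mk := Ideal.Quotient.mk I
  let x : Fin (d+1) → S := fun i => mk (Y i)
  let e : (Fin (n+1) → Fin M) → S := fun g => mk (genMon k n M g)
  have hx : ∀ b : MvPolynomial (Fin (d+1)) k, aeval x b = mk (aeval Y b) := by
    intro b
    exact (MvPolynomial.comp_aeval_apply Y (Ideal.Quotient.mkₐ k I) b).symm
  have hrepD : ∀ (D : ℕ) (f : MvPolynomial (Fin (n+1)) k), f.IsHomogeneous D →
      ∃ b : (Fin (n+1) → Fin M) → MvPolynomial (Fin (d+1)) k,
        mk f = ∑ g, aeval x (b g) * e g ∧ ∀ g, a * (b g).totalDegree ≤ D := by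
    intro D f hf
    obtain ⟨b, hb, hbd⟩ := homog_rep ha hI Y hYh hM D f hf
    refine ⟨b, ?_, hbd⟩
    have := Ideal.Quotient.eq.2 hb
    rw [map_sum] at this
    rw [show mk f = Ideal.Quotient.mk I f from rfl, this]
    exact Finset.sum_congr rfl fun g _ => by rw [map_mul, hx]
  have hspan : ∀ f : S, ∃ b : (Fin (n+1) → Fin M) → MvPolynomial (Fin (d+1)) k,
      f = ∑ g, aeval x (b g) * e g := by
    intro f
    obtain ⟨f, rfl⟩ := Ideal.Quotient.mk_surjective f
    choose b hb _ using fun i => hrepD i _ (homogeneousComponent_isHomogeneous i f)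
    refine ⟨fun g => ∑ i ∈ Finset.range (f.totalDegree + 1), b i g, ?_⟩
    conv_lhs => rw [← sum_homogeneousComponent f, map_sum]
    have e1 : ∀ g, aeval x (∑ i ∈ Finset.range (f.totalDegree + 1), b i g) * e g =
        ∑ i ∈ Finset.range (f.totalDegree + 1), aeval x (b i g) * e g := fun g => by
      rw [map_sum]; exact Finset.sum_mul _ _ _
    simp only [e1]
    refine Eq.trans ?_ Finset.sum_comm
    exact Finset.sum_congr rfl fun i _ => hb i
  have hinj := param_injective (k := k) (S := S) ht x e hspan
  let j0 : Fin (d+1) := ⟨0, by omega⟩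
  let j1 : Fin (d+1) := ⟨1, by omega⟩
  let j2 : Fin (d+1) := ⟨2, by omega⟩
  obtain ⟨p, hp0, m0, hcore⟩ := core_lemma' (i0 := j0) (i1 := j1) (i2 := j2) (by simp [j0, j1])
    (by simp [j0, j2]) (by simp [j1, j2]) (aeval x : MvPolynomial (Fin (d+1)) k →ₐ[k] S).toRingHom
    hinj e hspan
  have hX : ∀ i, (aeval x : MvPolynomial (Fin (d+1)) k →ₐ[k] S).toRingHom (X i) = x i :=
    fun i => aeval_X x i
  simp only [hX] at hcore
  have hpne : (aeval x : MvPolynomial (Fin (d+1)) k →ₐ[k] S).toRingHom p ≠ 0 := by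
    intro h0
    exact hp0 (hinj (by rw [map_zero]; exact h0))
  have hxj0 : x j0 = mk h := rfl
  have hkr : ∀ q ∈ (I ⊔ Ideal.span {h}).minimalPrimes, ∃ m1 : ℕ, ∀ m, m1 ≤ m →
      ∀ s : MvPolynomial (Fin (n+1)) k, s ∉ q →
        ¬ x j0 ^ m ∣ (aeval x : MvPolynomial (Fin (d+1)) k →ₐ[k] S).toRingHom p * mk s := by
    intro q hq
    have hIq : I ≤ q := le_sup_left.trans hq.1.2
    have := hq.1.1
    have hQ : (q.map mk).IsPrime := Ideal.map_isPrime_of_surjective Ideal.Quotient.mk_surjective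
      (by rw [Ideal.mk_ker]; exact hIq)
    obtain ⟨m1, hm1⟩ := krull_avoid (q.map mk) (x j0) _ (by
      rw [hxj0]
      exact Ideal.mem_map_of_mem _ (hq.1.2 (Ideal.mem_sup_right (Ideal.mem_span_singleton_self h))))
      hpne
    exact ⟨m1, fun m hm s hs => hm1 m hm _ fun hmem => hs ((Ideal.mem_quotient_iff_mem hIq).1 hmem)⟩
  obtain ⟨m1, hm1⟩ := hkr q1 hq1
  obtain ⟨m2, hm2⟩ := hkr q2 hq2
  obtain ⟨c, hc⟩ := Ideal.exists_pow_le_of_le_radical_of_fg hprod (IsNoetherian.noetherian _)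
  let m := m0 + m1 + m2 + 1
  let E := (c + 1) * m
  have hE : E ≠ 0 := by simp [E, m]
  have hJ : ∀ f ∈ I1 ^ E, ∀ g ∈ I2 ^ E, x j0 ^ m ∣ mk (f * g) := by
    intro f hf g hg
    have hfg : f * g ∈ (I ⊔ Ideal.span {h}) ^ m := by
      have : f * g ∈ I1 ^ E * I2 ^ E := Ideal.mul_mem_mul hf hg
      rw [← mul_pow, pow_mul] at this
      exact Ideal.pow_right_mono ((Ideal.pow_le_pow_right (Nat.le_succ c)).trans hc) m this
    have := Ideal.mem_map_of_mem mk hfg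
    rw [Ideal.map_pow, Ideal.map_sup, Ideal.map_quotient_self, bot_sup_eq, Ideal.map_span,
      Set.image_singleton, Ideal.span_singleton_pow, Ideal.mem_span_singleton] at this
    exact this
  have hirr' : irrI k n ≤ (I1 ^ E ⊔ I2 ^ E).radical := by
    refine hirr.trans (Ideal.radical_le_radical_iff.2 (sup_le ?_ ?_))
    · intro f hf; exact ⟨E, Ideal.mem_sup_left (Ideal.pow_mem_pow hf E)⟩
    · intro f hf; exact ⟨E, Ideal.mem_sup_right (Ideal.pow_mem_pow hf E)⟩
  obtain ⟨N, hN⟩ := Ideal.exists_pow_le_of_le_radical_of_fg hirr' (IsNoetherian.noetherian _)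
  have hdec : ∀ i, ∃ f g, f ∈ I1 ^ E ∧ g ∈ I2 ^ E ∧ f.IsHomogeneous (a * N) ∧ f + g = Y i ^ N := by
    intro i
    have hY : (Y i ^ N).IsHomogeneous (a * N) := (hYh i).pow N
    have hm := hN (homog_mem_irrI_pow hY (Nat.le_mul_of_pos_left N ha))
    obtain ⟨f, hf, g, hg, hfg⟩ := Submodule.mem_sup.1 hm
    refine ⟨homogeneousComponent (a * N) f, homogeneousComponent (a * N) g, (h1.pow E) f hf _,
      (h2.pow E) g hg _, homogeneousComponent_isHomogeneous _ _, ?_⟩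
    rw [← map_add, hfg, homogeneousComponent_of_mem (m := a * N) (n := a * N) hY, if_pos rfl]
  have hrepN : ∀ f : MvPolynomial (Fin (n+1)) k, f.IsHomogeneous (a * N) →
      ∃ b : (Fin (n+1) → Fin M) → MvPolynomial (Fin (d+1)) k,
        mk f = ∑ g, aeval x (b g) * e g ∧ ∀ g, (b g).totalDegree ≤ N := by
    intro f hf
    obtain ⟨b, hb, hbd⟩ := hrepD _ f hf
    exact ⟨b, hb, fun g => Nat.le_of_mul_le_mul_left (hbd g) ha⟩
  obtain ⟨f1, g1, hf1, hg1, hf1h, hs1⟩ := hdec j1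
  obtain ⟨f2, g2, hf2, hg2, hf2h, hs2⟩ := hdec j2
  have hfin := hcore m (by omega) N (mk f1) (mk g1) (mk f2) (mk g2) (hrepN f1 hf1h)
    (hrepN f2 hf2h) (by rw [← map_add, hs1, map_pow]) (by rw [← map_add, hs2, map_pow])
    (by rw [← map_mul, ← map_mul]; exact dvd_sub (hJ _ hf1 _ hg2) (hJ _ hf2 _ hg1))
    (by rw [← map_mul]; exact hJ _ hf1 _ hg1)
  have hYq : ∀ q ∈ (I ⊔ Ideal.span {h}).minimalPrimes, Y j1 ^ N ∉ q := by
    intro q hq hmem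
    have hqp := hq.1.1
    have h3 := hqp.mem_of_pow_mem _ hmem
    have hY1 : Y j1 = l ⟨0, by omega⟩ ^ a := rfl
    rw [hY1] at h3
    refine hlq q hq ?_ ⟨0, by omega⟩ rfl (hqp.mem_of_pow_mem _ h3)
    rintro rfl
    have := htd _ hq
    rw [tdn_irrI] at this
    omega
  rcases hfin with hfin | hfin
  · refine hm2 m (by omega) f1 (fun hmem => hYq q2 hq2 ?_) hfin
    rw [← hs1]
    exact q2.add_mem hmem (h22 (Ideal.pow_le_self hE hg1))
  · refine hm1 m (by omega) g1 (fun hmem => hYq q1 hq1 ?_) hfin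
    rw [← hs1]
    exact q1.add_mem (h11 (Ideal.pow_le_self hE hf1)) hmem

theorem algDep_of_lt {k : Type} [Field k] {B : Type} [CommRing B] [IsDomain B] [Algebra k B]
    [Algebra.FiniteType k B] (δ : B) (hδ : δ ≠ 0) {ι : Type} [Finite ι]
    (τ : ι → Localization.Away δ) (h : tdn k B < Nat.card ι) : ¬ AlgebraicIndependent k τ := by
  intro hτ
  have hle : Submonoid.powers δ ≤ nonZeroDivisors B := powers_le_nonZeroDivisors_of_noZeroDivisors hδ
  haveI : IsDomain (Localization.Away δ) := IsLocalization.isDomain_localization hle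
  have hinj : Function.Injective (algebraMap B (Localization.Away δ)) :=
    IsLocalization.injective _ hle
  haveI : FaithfulSMul B (Localization.Away δ) := (faithfulSMul_iff_algebraMap_injective _ _).mpr hinj
  haveI : Algebra.IsAlgebraic B (Localization.Away δ) := 
    IsLocalization.isAlgebraic (Localization.Away δ) (Submonoid.powers δ)
  have h0 : Algebra.trdeg B (Localization.Away δ) = 0 := trdeg_eq_zero
  have h1 : Algebra.trdeg k B + Algebra.trdeg B (Localization.Away δ) 
    = Algebra.trdeg k (Localization.Away δ) := trdeg_add_eq k B
  rw [h0, add_zero, ← tdn_cast k B] at h1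
  have h2 := hτ.cardinalMk_le_trdeg
  rw [← h1, ← Nat.cast_card] at h2
  have : Nat.card ι ≤ tdn k B := by exact_mod_cast h2
  omega

theorem tdn_mvPolyOver {k : Type} [Field k] {A : Type} [CommRing A] [IsDomain A] [Algebra k A]
    [Algebra.FiniteType k A] {E : Type} [Fintype E] :
    tdn k (MvPolynomial E A) = Fintype.card E + tdn k A := by
  haveI : Algebra.FiniteType k (MvPolynomial E A) := 
    Algebra.FiniteType.trans (S := A) inferInstance inferInstance
  have h1 : Algebra.trdeg k A + Algebra.trdeg A (MvPolynomial E A) 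
    = Algebra.trdeg k (MvPolynomial E A) := trdeg_add_eq k A
  rw [← tdn_cast k A, ← tdn_cast k (MvPolynomial E A), MvPolynomial.trdeg_of_isDomain] at h1
  simp at h1
  have : tdn k A + Fintype.card E = tdn k (MvPolynomial E A) := by exact_mod_cast h1
  omega

theorem mulVec_inv_mulVec {Q J : Type} [CommRing Q] [Fintype J] [DecidableEq J] (M : Matrix J J Q)
    (h : IsUnit M.det) (r : J → Q) : M.mulVec (M⁻¹.mulVec r) = r := by
  rw [Matrix.mulVec_mulVec, Matrix.mul_nonsing_inv _ h, Matrix.one_mulVec]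

theorem cramer_dep {k : Type} [Field k] {A : Type} [CommRing A] [IsDomain A] [Algebra k A]
    [Algebra.FiniteType k A] {J E S : Type} [Fintype J] [DecidableEq J] [Fintype E] [Fintype S]
    (H : J → (J ⊕ E) → A) (f : J → S → A) (hcard : Fintype.card S + tdn k A < Fintype.card J) :
    ∃ F : MvPolynomial (J ⊕ E) k, F ≠ 0 ∧ ∀ (ev : A →ₐ[k] k) (t : J ⊕ E → k) (l : S → k),
      ev (Matrix.det (Matrix.of fun j i => H j (Sum.inl i))) ≠ 0 →
      (∀ j, ∑ b, t b * ev (H j b) = ∑ s, l s * ev (f j s)) → eval t F = 0 := by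
  classical
  set δ := Matrix.det (Matrix.of fun j i => H j (Sum.inl i)) with hδ
  by_cases h0 : δ = 0
  · exact ⟨1, one_ne_zero, fun ev t l h => absurd (by rw [h0, map_zero]) h⟩
  haveI : Algebra.FiniteType k (MvPolynomial (E ⊕ S) A) := 
    Algebra.FiniteType.trans (S := A) inferInstance inferInstance
  let D : MvPolynomial (E ⊕ S) A := C δ
  have hD : D ≠ 0 := by simpa [D] using h0
  let Q := Localization.Away D
  let c : A →ₐ[k] Q := (IsScalarTower.toAlgHom k (MvPolynomial (E ⊕ S) A) Q).comp
    (IsScalarTower.toAlgHom k A (MvPolynomial (E ⊕ S) A))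
  have hc : ∀ x, c x = algebraMap (MvPolynomial (E ⊕ S) A) Q (C x) := fun x => rfl
  let X' : E ⊕ S → Q := fun e => algebraMap (MvPolynomial (E ⊕ S) A) Q (X e)
  let M : Matrix J J Q := Matrix.of fun j i => c (H j (Sum.inl i))
  have hMdet : M.det = c δ := by
    rw [hδ, AlgHom.map_det]; rfl
  have hunit : IsUnit M.det := by
    rw [hMdet, hc]
    exact IsLocalization.Away.algebraMap_isUnit D
  let rhs : J → Q := fun j => ∑ s, X' (Sum.inr s) * c (f j s) - ∑ e, X' (Sum.inl e) * c (H j (Sum.inr e))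
  let sol : J → Q := M⁻¹.mulVec rhs
  have hsol : M.mulVec sol = rhs := mulVec_inv_mulVec M hunit rhs
  let τ : J ⊕ E → Q := Sum.elim sol (fun e => X' (Sum.inl e))
  have hdep : ¬ AlgebraicIndependent k τ := by
    apply algDep_of_lt D hD
    rw [tdn_mvPolyOver]
    simp
    omega
  rw [algebraicIndependent_iff] at hdep
  push Not at hdep
  obtain ⟨F, hF, hF0⟩ := hdep
  refine ⟨F, hF0, ?_⟩
  intro ev t l hev hbad
  let φ0 : MvPolynomial (E ⊕ S) A →+* k := eval₂Hom (ev : A →+* k) (Sum.elim (fun e => t (Sum.inr e)) l)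
  have hφD : IsUnit (φ0 D) := by
    simp only [φ0, D, coe_eval₂Hom, eval₂_C]
    exact isUnit_iff_ne_zero.mpr hev
  let ψ : Q →+* k := IsLocalization.Away.lift D hφD
  have hψ : ∀ x, ψ (algebraMap (MvPolynomial (E ⊕ S) A) Q x) = φ0 x := fun x =>
    IsLocalization.Away.lift_eq D hφD x
  have hψc : ∀ x, ψ (c x) = ev x := by
    intro x; rw [hc, hψ]; simp [φ0]
  have hψX : ∀ e, ψ (X' e) = Sum.elim (fun e => t (Sum.inr e)) l e := by
    intro e; simp only [X']; rw [hψ]; simp [φ0]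
  have hτ : ∀ b, ψ (τ b) = t b := by
    have key : (fun i => ψ (sol i)) = fun i => t (Sum.inl i) := by
      let M' : Matrix J J k := Matrix.of fun j i => ev (H j (Sum.inl i))
      have hM' : IsUnit M'.det := by
        have : M'.det = ev δ := by rw [hδ, AlgHom.map_det]; rfl
        rw [this]; exact isUnit_iff_ne_zero.mpr hev
      have e1 : M'.mulVec (fun i => ψ (sol i)) = M'.mulVec (fun i => t (Sum.inl i)) := by
        funext j
        have h1 := congrArg ψ (congrFun hsol j)
        simp only [Matrix.mulVec, dotProduct, M, Matrix.of_apply, map_sum, map_mul, hψc, rhs, map_sub,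
          hψX, Sum.elim_inr, Sum.elim_inl] at h1
        have h2 := hbad j
        rw [Fintype.sum_sum_type] at h2
        simp only [Matrix.mulVec, dotProduct, M', Matrix.of_apply]
        rw [h1, ← h2]
        simp only [mul_comm]
        ring
      exact Matrix.mulVec_injective_of_isUnit ((Matrix.isUnit_iff_isUnit_det _).mpr hM') e1
    rintro (i | e)
    · exact congrFun key i
    · exact hψX _
  let ψa : Q →ₐ[k] k := { ψ with 
    commutes' := by
      intro r
      have : algebraMap k Q r = c (algebraMap k A r) := (c.commutes r).symm
      show ψ (algebraMap k Q r) = r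
      rw [this, hψc]; exact ev.commutes r }
  have : ψa (aeval τ F) = aeval (fun b => ψa (τ b)) F := MvPolynomial.comp_aeval_apply τ ψa F
  rw [hF, map_zero] at this
  have h3 : (fun b => ψa (τ b)) = t := funext hτ
  rw [h3] at this
  rw [← MvPolynomial.coe_aeval_eq_eval]
  exact this.symm

theorem cramer_dep' {k : Type} [Field k] {A : Type} [CommRing A] [IsDomain A] [Algebra k A]
    [Algebra.FiniteType k A] {m w r : ℕ} 
    (H : Fin m → Fin w → A) (f : Fin m → Fin r → A) (hcard : r + tdn k A < m)
    (κ : Fin m → Fin w) (hκ : Function.Injective κ) :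
    ∃ F : MvPolynomial (Fin w) k, F ≠ 0 ∧ ∀ (ev : A →ₐ[k] k) (t : Fin w → k) (l : Fin r → k),
      ev (Matrix.det (Matrix.of fun j i => H j (κ i))) ≠ 0 →
      (∀ j, ∑ b, t b * ev (H j b) = ∑ s, l s * ev (f j s)) → eval t F = 0 := by
  classical
  let e : Fin m ⊕ {b // b ∉ Set.range κ} ≃ Fin w :=
    ((Equiv.ofInjective κ hκ).sumCongr (Equiv.refl _)).trans (Equiv.sumCompl (· ∈ Set.range κ))
  have he : ∀ i, e (Sum.inl i) = κ i := fun i => by simp [e]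
  obtain ⟨F, hF0, hF⟩ := cramer_dep (k := k) (fun j b => H j (e b)) f (by simpa using hcard)
  refine ⟨rename e F, ?_, ?_⟩
  · intro h; exact hF0 (rename_injective _ e.injective (by rw [h, map_zero]))
  · intro ev t l h1 h2
    rw [eval_rename]
    apply hF ev (t ∘ e) l
    · simpa only [he] using h1
    · intro j
      rw [← h2 j]
      exact Fintype.sum_equiv e _ _ (fun b => rfl)

/-- The gradient at `v` as a linear map. -/
noncomputable def gradMap {k : Type} [Field k] {n : ℕ} (v : Fin (n+1) → k) :
    MvPolynomial (Fin (n+1)) k →ₗ[k] (Fin (n+1) → k) where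
  toFun h := gradientAt h v
  map_add' f g := by funext j; simp [gradientAt]
  map_smul' c f := by funext j; simp [gradientAt]

theorem gradMap_apply {k : Type} [Field k] {n : ℕ} (v : Fin (n+1) → k)
    (h : MvPolynomial (Fin (n+1)) k) : gradMap v h = gradientAt h v := rfl

/-- The conormal space at `v`. -/
noncomputable def NI {k : Type} [Field k] {n : ℕ} (I : Ideal (MvPolynomial (Fin (n+1)) k))
    (v : Fin (n+1) → k) : Submodule k (Fin (n+1) → k) :=
  Submodule.map (gradMap v) (I.restrictScalars k)

theorem mem_NI {k : Type} [Field k] {n : ℕ} {I : Ideal (MvPolynomial (Fin (n+1)) k)}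
    {v : Fin (n+1) → k} {u : Fin (n+1) → k} : u ∈ NI I v ↔ ∃ f ∈ I, gradientAt f v = u := Iff.rfl

theorem gradientAt_mul {k : Type} [Field k] {n : ℕ} (v : Fin (n+1) → k)
    (f g : MvPolynomial (Fin (n+1)) k) :
    gradientAt (f * g) v = eval v f • gradientAt g v + eval v g • gradientAt f v := by
  funext j
  simp [gradientAt, Derivation.leibniz]

theorem NI_span {k : Type} [Field k] {n : ℕ} (G : Set (MvPolynomial (Fin (n+1)) k))
    (v : Fin (n+1) → k) (hv : ∀ g ∈ G, eval v g = 0) :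
    NI (Ideal.span G) v = Submodule.span k ((fun g => gradientAt g v) '' G) := by
  apply le_antisymm
  · intro u hu
    obtain ⟨f, hf, rfl⟩ := mem_NI.mp hu
    have : eval v f = 0 ∧ gradientAt f v ∈ Submodule.span k ((fun g => gradientAt g v) '' G) := by
      refine Submodule.span_induction (p := fun f _ => eval v f = 0 ∧ 
        gradientAt f v ∈ Submodule.span k ((fun g => gradientAt g v) '' G)) ?_ ?_ ?_ ?_ hf
      · intro g hg; exact ⟨hv g hg, Submodule.subset_span ⟨g, hg, rfl⟩⟩
      · refine ⟨by simp, ?_⟩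
        rw [← gradMap_apply, map_zero]; exact Submodule.zero_mem _
      · rintro f g _ _ ⟨h1, h2⟩ ⟨h3, h4⟩
        refine ⟨by simp [h1, h3], ?_⟩
        rw [← gradMap_apply, map_add]; exact Submodule.add_mem _ h2 h4
      · rintro a f _ ⟨h1, h2⟩
        refine ⟨by simp [h1], ?_⟩
        rw [smul_eq_mul, gradientAt_mul, h1, zero_smul, add_zero]
        exact Submodule.smul_mem _ _ h2
    exact this.2
  · rw [Submodule.span_le]
    rintro _ ⟨g, hg, rfl⟩
    exact mem_NI.mpr ⟨g, Ideal.subset_span hg, rfl⟩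

theorem span_homVan {k : Type} [Field k] [Infinite k] {n : ℕ} (S : Set (ProjPt k n))
    (v : Fin (n+1) → k) :
    Submodule.span k {w | ∃ h ∈ homVanishingPolys S, w = gradientAt h v} = NI (Iv S) v := by
  apply le_antisymm
  · rw [Submodule.span_le]
    rintro _ ⟨h, hh, rfl⟩
    exact mem_NI.mpr ⟨h, fun v hv hS => hh.2 _ hS v hv rfl, rfl⟩
  · intro u hu
    obtain ⟨f, hf, rfl⟩ := mem_NI.mp hu
    have h1 := Iv_homI S f hf
    rw [← gradMap_apply]
    rw [← sum_homogeneousComponent f, map_sum]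
    apply Submodule.sum_mem
    intro i _
    apply Submodule.subset_span
    refine ⟨_, ⟨⟨i, homogeneousComponent_isHomogeneous i f⟩, ?_⟩, rfl⟩
    rintro x hx v hv rfl
    exact h1 i v hv hx

theorem gradientAt_smul {k : Type} [Field k] {n : ℕ} {f : MvPolynomial (Fin (n+1)) k} {e : ℕ}
    (hf : f.IsHomogeneous e) (c : k) (v : Fin (n+1) → k) :
    gradientAt f (c • v) = c ^ (e-1) • gradientAt f v := by
  funext j
  simp only [gradientAt, Pi.smul_apply, smul_eq_mul]
  exact eval_smul_of_homog (hf.pderiv) c v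

theorem NI_smul_le {k : Type} [Field k] {n : ℕ} {I : Ideal (MvPolynomial (Fin (n+1)) k)}
    (hI : HomI I) (c : k) (v : Fin (n+1) → k) : NI I (c • v) ≤ NI I v := by
  intro u hu
  obtain ⟨f, hf, rfl⟩ := mem_NI.mp hu
  have h1 := hI f hf
  rw [← gradMap_apply, ← sum_homogeneousComponent f, map_sum]
  apply Submodule.sum_mem
  intro i _
  rw [gradMap_apply, gradientAt_smul (homogeneousComponent_isHomogeneous i f)]
  exact Submodule.smul_mem _ _ (mem_NI.mpr ⟨_, h1 i, rfl⟩)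

theorem NI_smul {k : Type} [Field k] {n : ℕ} {I : Ideal (MvPolynomial (Fin (n+1)) k)}
    (hI : HomI I) (c : k) (hc : c ≠ 0) (v : Fin (n+1) → k) : NI I (c • v) = NI I v := by
  apply le_antisymm (NI_smul_le hI c v)
  have := NI_smul_le hI c⁻¹ (c • v)
  rwa [smul_smul, inv_mul_cancel₀ hc, one_smul] at this

theorem eval_linForm {k : Type} [Field k] {n : ℕ} (c v : Fin (n+1) → k) :
    eval v (linForm c) = ∑ j, c j * v j := by
  rw [linForm_apply, map_sum]
  simp [smul_eval]

theorem grad_linForm {k : Type} [Field k] {n : ℕ} (c v : Fin (n+1) → k) :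
    gradientAt (linForm c) v = c := by
  funext j
  rw [linForm_apply]
  simp [gradientAt, smul_eval, pderiv_X, Pi.single_apply]

theorem gradientAt_pow {k : Type} [Field k] {n : ℕ} (v : Fin (n+1) → k)
    (f : MvPolynomial (Fin (n+1)) k) (m : ℕ) :
    gradientAt (f ^ m) v = ((m : k) * eval v f ^ (m-1)) • gradientAt f v := by
  funext j
  simp [gradientAt, Derivation.leibniz_pow]
  ring

theorem exists_functional {k : Type} [Field k] {m : ℕ} (N : Submodule k (Fin m → k))
    (u : Fin m → k) (hu : u ∉ N) :
    ∃ c : Fin m → k, (∀ x ∈ N, ∑ j, c j * x j = 0) ∧ ∑ j, c j * u j = 1 := by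
  obtain ⟨φ, h1, h2⟩ := Submodule.exists_le_ker_of_notMem hu
  have hφ : ∀ x, φ x = ∑ j, φ (Pi.single j 1) * x j := by
    intro x
    conv_lhs => rw [pi_eq_sum_univ' x]
    simp [map_sum, map_smul, mul_comm]
  refine ⟨fun j => (φ u)⁻¹ * φ (Pi.single j 1), ?_, ?_⟩
  · intro x hx
    simp only [mul_assoc]
    rw [← Finset.mul_sum, ← hφ, h2 hx, mul_zero]
  · simp only [mul_assoc]
    rw [← Finset.mul_sum, ← hφ, inv_mul_cancel₀ h1]

theorem grad_surj {k : Type} [Field k] [CharZero k] {n a : ℕ} (ha : 1 < a)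
    (v0 v : Fin (n+1) → k) (hv : ∀ c : k, v ≠ c • v0) (u : Fin (n+1) → k) :
    ∃ h : MvPolynomial (Fin (n+1)) k, h.IsHomogeneous a ∧ eval v0 h = 0 ∧ gradientAt h v = u := by
  obtain ⟨l, hl0, hl1⟩ := exists_functional (Submodule.span k {v0}) v (by
    rw [Submodule.mem_span_singleton]; rintro ⟨c, hc⟩; exact hv c hc.symm)
  have hl0' := hl0 v0 (Submodule.mem_span_singleton_self v0)
  let s := ∑ j, u j * v j
  let c : k := (a - 1) / a * s
  have ha0 : (a : k) ≠ 0 := by exact_mod_cast (by omega : a ≠ 0)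
  refine ⟨linForm l ^ (a-1) * linForm (u - c • l), ?_, ?_, ?_⟩
  · have := ((linForm_homog l).pow (a-1)).mul (linForm_homog (u - c • l))
    have e : 1 * (a-1) + 1 = a := by omega
    rwa [e] at this
  · rw [map_mul, map_pow, eval_linForm, hl0', zero_pow (by omega), zero_mul]
  · rw [gradientAt_mul, gradientAt_pow, grad_linForm, grad_linForm, map_pow, eval_linForm, hl1, eval_linForm]
    have e1 : ∑ j, (u - c • l) j * v j = s - c := by
      simp only [Pi.sub_apply, Pi.smul_apply, smul_eq_mul, sub_mul, Finset.sum_sub_distrib, mul_assoc]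
      rw [← Finset.mul_sum, hl1, mul_one]
    rw [e1, one_pow, one_smul, one_pow, mul_one, smul_smul]
    have e2 : (s - c) * ((a - 1 : ℕ) : k) = c := by
      rw [Nat.cast_sub (by omega)]
      simp only [c]
      field_simp
      push_cast
      ring
    rw [e2]; simp

theorem grad_surj0 {k : Type} [Field k] {n a : ℕ} (ha : 1 < a)
    (v0 : Fin (n+1) → k) (hv0 : v0 ≠ 0) (u : Fin (n+1) → k) (hu : ∑ j, u j * v0 j = 0) :
    ∃ h : MvPolynomial (Fin (n+1)) k, h.IsHomogeneous a ∧ eval v0 h = 0 ∧ gradientAt h v0 = u := by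
  obtain ⟨l, hl0, hl1⟩ := exists_functional (⊥ : Submodule k (Fin (n+1) → k)) v0 (by simpa using hv0)
  refine ⟨linForm l ^ (a-1) * linForm u, ?_, ?_, ?_⟩
  · have := ((linForm_homog l).pow (a-1)).mul (linForm_homog u)
    have e : 1 * (a-1) + 1 = a := by omega
    rwa [e] at this
  · rw [map_mul, eval_linForm u, hu, mul_zero]
  · rw [gradientAt_mul, eval_linForm u, hu, zero_smul, add_zero, grad_linForm, map_pow, eval_linForm, hl1,
      one_pow, one_smul]

theorem finite_prod_poly {k : Type} [Field k] {w : ℕ} {ι : Type} [Finite ι]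
    (P : ι → (Fin w → k) → Prop)
    (h : ∀ i, ∃ F : MvPolynomial (Fin w) k, F ≠ 0 ∧ ∀ t, P i t → eval t F = 0) :
    ∃ F : MvPolynomial (Fin w) k, F ≠ 0 ∧ ∀ t, (∃ i, P i t) → eval t F = 0 := by
  haveI := Fintype.ofFinite ι
  choose F hF0 hF using h
  refine ⟨∏ i, F i, Finset.prod_ne_zero_iff.mpr fun i _ => hF0 i, ?_⟩
  rintro t ⟨i, hi⟩
  rw [map_prod]
  exact Finset.prod_eq_zero (Finset.mem_univ i) (hF i t hi)

theorem bertini_piece {k : Type} [Field k] {n d w : ℕ} (hdn : d ≤ n)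
    (r : Ideal (MvPolynomial (Fin (n+1)) k)) (hr : r.IsPrime)
    (ht : tdn k (MvPolynomial (Fin (n+1)) k ⧸ r) ≤ d)
    (h : Fin w → MvPolynomial (Fin (n+1)) k) (f : Fin (n-d) → MvPolynomial (Fin (n+1)) k)
    (κ : Fin (n+1) → Fin w) :
    ∃ F : MvPolynomial (Fin w) k, F ≠ 0 ∧ ∀ t : Fin w → k, 
      (∃ v : Fin (n+1) → k, (∀ g ∈ r, eval v g = 0) ∧
        LinearIndependent k (fun i => gradientAt (h (κ i)) v) ∧
        gradientAt (∑ b, t b • h b) v ∈ Submodule.span k (Set.range fun s => gradientAt (f s) v)) →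
      eval t F = 0 := by
  by_cases hκ : Function.Injective κ
  swap
  · refine ⟨1, one_ne_zero, ?_⟩
    rintro t ⟨v, -, hli, -⟩
    refine absurd (fun i j hij => hli.injective ?_) hκ
    simp only [hij]
  obtain ⟨F, hF0, hF⟩ := cramer_dep' (k := k) 
    (fun j b => Ideal.Quotient.mk r (pderiv j (h b)))
    (fun j s => Ideal.Quotient.mk r (pderiv j (f s))) (by omega) κ hκ
  refine ⟨F, hF0, ?_⟩
  rintro t ⟨v, hv, hli, hbad⟩
  obtain ⟨l, hl⟩ := (Submodule.mem_span_range_iff_exists_fun k).mp hbad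
  let ev : (MvPolynomial (Fin (n+1)) k ⧸ r) →ₐ[k] k := Ideal.Quotient.liftₐ r (aeval v) 
    (fun g hg => by have := hv g hg; rwa [← coe_aeval_eq_eval] at this)
  have hev : ∀ g, ev (Ideal.Quotient.mk r g) = eval v g := by
    intro g
    rw [← coe_aeval_eq_eval]
    rfl
  apply hF ev t l
  · rw [AlgHom.map_det]
    have hu := (Matrix.linearIndependent_cols_iff_isUnit (K := k) (A := Matrix.of fun j i => 
      gradientAt (h (κ i)) v j)).mp hli
    rw [Matrix.isUnit_iff_isUnit_det] at hu
    have : (ev.mapMatrix (Matrix.of fun j i => Ideal.Quotient.mk r (pderiv j (h (κ i))))) =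
      Matrix.of fun j i => gradientAt (h (κ i)) v j := by
      ext j i
      simp [hev, gradientAt]
    rw [this]
    exact hu.ne_zero
  · intro j
    have := congrFun hl j
    rw [← gradMap_apply v (∑ b, t b • h b), map_sum] at this
    simp only [Finset.sum_apply, Pi.smul_apply, smul_eq_mul, map_smul, gradMap_apply] at this
    simp only [hev]
    exact this.symm

theorem bertini_chart {k : Type} [Field k] {n d w : ℕ} (hdn : d ≤ n)
    {I : Ideal (MvPolynomial (Fin (n+1)) k)} (hI : HomI I) (hp : I.IsPrime)
    (ht : tdn k (MvPolynomial (Fin (n+1)) k ⧸ I) = d + 1)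
    (hsm : ∀ v : Fin (n+1) → k, v ≠ 0 → (∀ g ∈ I, eval v g = 0) → 
      Module.finrank k (NI I v) = n - d)
    (h : Fin w → MvPolynomial (Fin (n+1)) k) (j : Fin (n+1)) :
    ∃ F : MvPolynomial (Fin w) k, F ≠ 0 ∧ ∀ t : Fin w → k, 
      (∃ v : Fin (n+1) → k, v j = 1 ∧ (∀ g ∈ I, eval v g = 0) ∧
        Submodule.span k (Set.range fun b => gradientAt (h b) v) = ⊤ ∧
        gradientAt (∑ b, t b • h b) v ∈ NI I v) → eval t F = 0 := by
  classical
  obtain ⟨G, hG⟩ := (IsNoetherian.noetherian I : I.FG)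
  have hG' : Ideal.span (G : Set (MvPolynomial (Fin (n+1)) k)) = I := hG
  let J := I ⊔ Ideal.span {(X j - 1 : MvPolynomial (Fin (n+1)) k)}
  have hXj : (X j - 1 : MvPolynomial (Fin (n+1)) k) ∉ I := by
    intro hx
    have h0 := hI _ hx 0
    rw [map_sub, homogeneousComponent_of_mem (n := 1) (isHomogeneous_X k j),
      homogeneousComponent_of_mem (n := 0) (isHomogeneous_one _ k)] at h0
    simp at h0
    exact hp.ne_top ((Ideal.eq_top_iff_one I).mpr h0)
  have hfin : Finite J.minimalPrimes := (Ideal.finite_minimalPrimes_of_isNoetherianRing _ J).to_subtype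
  have key := fun (i : J.minimalPrimes × (Fin (n-d) → G) × (Fin (n+1) → Fin w)) => 
    bertini_piece (k := k) hdn i.1.1 i.1.2.1.1 (by
      haveI := i.1.2.1.1
      have hlt : I < i.1.1 := lt_of_le_of_ne (le_trans le_sup_left i.1.2.1.2) (by
        intro he
        apply hXj
        rw [he]
        exact i.1.2.1.2 (Ideal.mem_sup_right (Ideal.mem_span_singleton_self _)))
      have := tdn_quot_lt (k := k) I i.1.1 hlt
      omega) h (fun s => (i.2.1 s : MvPolynomial (Fin (n+1)) k)) i.2.2
  obtain ⟨F, hF0, hF⟩ := finite_prod_poly _ key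
  refine ⟨F, hF0, ?_⟩
  rintro t ⟨v, hvj, hv, hspan, hbad⟩
  apply hF
  have hv0 : v ≠ 0 := by rintro rfl; simp at hvj
  have hJv : J ≤ RingHom.ker (eval v) := by
    refine sup_le (fun g hg => hv g hg) ?_
    rw [Ideal.span_singleton_le_iff_mem, RingHom.mem_ker]
    simp [hvj]
  haveI : (RingHom.ker (eval v)).IsPrime := RingHom.ker_isPrime _
  obtain ⟨r, hr, hrv⟩ := Ideal.exists_minimalPrimes_le hJv
  have hN : NI I v = Submodule.span k ((fun g => gradientAt g v) '' G) := by
    rw [← hG']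
    exact NI_span _ v (fun g hg => hv g (hG' ▸ Ideal.subset_span hg))
  obtain ⟨f, hfm, hfs, -⟩ := Submodule.exists_fun_fin_finrank_span_eq k 
    ((fun g => gradientAt g v) '' (G : Set (MvPolynomial (Fin (n+1)) k)))
  have hfr := hsm v hv0 hv
  rw [hN] at hfr
  obtain ⟨q, hqm, hqs, hqi⟩ := Submodule.exists_fun_fin_finrank_span_eq k
    (Set.range fun b => gradientAt (h b) v)
  have hqr : Module.finrank k (Submodule.span k (Set.range fun b => gradientAt (h b) v)) = n + 1 := by
    rw [hspan]; simp
  choose f' hf' hff using hfm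
  choose κ hκ using hqm
  refine ⟨(⟨r, hr⟩, fun s => ⟨f' (Fin.cast hfr.symm s), hf' _⟩, fun i => κ (Fin.cast hqr.symm i)), 
    v, fun g hg => hrv hg, ?_, ?_⟩
  · simp only [hκ]
    exact hqi.comp _ (Fin.cast_injective _)
  · rw [hN, ← hfs] at hbad
    refine Submodule.span_mono ?_ hbad
    rintro _ ⟨y, rfl⟩
    refine ⟨Fin.cast hfr y, ?_⟩
    exact hff y

theorem zero_smul_of_homI {k : Type} [Field k] {n : ℕ}
    {I : Ideal (MvPolynomial (Fin (n+1)) k)} (hI : HomI I) (c : k) (v : Fin (n+1) → k)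
    (hv : ∀ g ∈ I, eval v g = 0) : ∀ g ∈ I, eval (c • v) g = 0 := by
  intro g hg
  rw [eval_smul_eq_poly]
  exact Finset.sum_eq_zero fun i _ => by rw [hv _ (hI g hg i), mul_zero]

theorem bertini_all {k : Type} [Field k] {n d w a : ℕ} (hdn : d ≤ n)
    {I : Ideal (MvPolynomial (Fin (n+1)) k)} (hI : HomI I) (hp : I.IsPrime)
    (ht : tdn k (MvPolynomial (Fin (n+1)) k ⧸ I) = d + 1)
    (hsm : ∀ v : Fin (n+1) → k, v ≠ 0 → (∀ g ∈ I, eval v g = 0) → 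
      Module.finrank k (NI I v) = n - d)
    (h : Fin w → MvPolynomial (Fin (n+1)) k) (hh : ∀ b, (h b).IsHomogeneous a) :
    ∃ F : MvPolynomial (Fin w) k, F ≠ 0 ∧ ∀ t : Fin w → k, 
      (∃ v : Fin (n+1) → k, v ≠ 0 ∧ (∀ g ∈ I, eval v g = 0) ∧
        Submodule.span k (Set.range fun b => gradientAt (h b) v) = ⊤ ∧
        gradientAt (∑ b, t b • h b) v ∈ NI I v) → eval t F = 0 := by
  obtain ⟨F, hF0, hF⟩ := finite_prod_poly _ (bertini_chart hdn hI hp ht hsm h)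
  refine ⟨F, hF0, ?_⟩
  rintro t ⟨v, hv0, hv, hspan, hbad⟩
  apply hF
  obtain ⟨j, hj⟩ := Function.ne_iff.mp hv0
  have hj : v j ≠ 0 := hj
  have hc : (v j)⁻¹ ≠ 0 := inv_ne_zero hj
  refine ⟨j, (v j)⁻¹ • v, by simp [hj], zero_smul_of_homI hI _ _ hv, ?_, ?_⟩
  · rw [eq_top_iff, ← hspan, Submodule.span_le]
    rintro _ ⟨b, rfl⟩
    have hm : gradientAt (h b) ((v j)⁻¹ • v) ∈ 
      Submodule.span k (Set.range fun b => gradientAt (h b) ((v j)⁻¹ • v)) := 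
        Submodule.subset_span ⟨b, rfl⟩
    have e := gradientAt_smul (hh b) (v j)⁻¹ v
    have := Submodule.smul_mem _ (((v j)⁻¹ ^ (a-1))⁻¹) hm
    rw [e, smul_smul, inv_mul_cancel₀ (pow_ne_zero _ hc), one_smul] at this
    exact this
  · rw [NI_smul hI _ hc, gradientAt_smul (e := a)]
    · exact Submodule.smul_mem _ _ hbad
    · refine IsHomogeneous.sum _ _ _ fun b _ => ?_
      rw [smul_eq_C_mul]
      simpa using (isHomogeneous_C (Fin (n+1)) (t b)).mul (hh b)

theorem exists_perp_notMem {k : Type} [Field k] {n d : ℕ} (hd : 1 ≤ d) (hdn : d ≤ n)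
    (v0 : Fin (n+1) → k) (N : Submodule k (Fin (n+1) → k)) (hN : Module.finrank k N = n - d) :
    ∃ u : Fin (n+1) → k, ∑ j, u j * v0 j = 0 ∧ u ∉ N := by
  let φ : (Fin (n+1) → k) →ₗ[k] k := 
    { toFun := fun u => ∑ j, u j * v0 j
      map_add' := fun x y => by simp [add_mul, Finset.sum_add_distrib]
      map_smul' := fun c x => by simp [Finset.mul_sum, mul_assoc] }
  by_contra hcon
  push Not at hcon
  have hle : LinearMap.ker φ ≤ N := fun u hu => hcon u hu
  have h1 := Submodule.finrank_mono hle
  have h2 := φ.finrank_range_add_finrank_ker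
  have h3 := Submodule.finrank_le (LinearMap.range φ)
  simp at h2 h3
  omega

theorem bertini {k : Type} [Field k] [CharZero k] {n d a : ℕ} (hd : 1 ≤ d) (hdn : d ≤ n) (ha : 1 < a)
    {I : Ideal (MvPolynomial (Fin (n+1)) k)} (hI : HomI I) (hp : I.IsPrime)
    (ht : tdn k (MvPolynomial (Fin (n+1)) k ⧸ I) = d + 1)
    (hsm : ∀ v : Fin (n+1) → k, v ≠ 0 → (∀ g ∈ I, eval v g = 0) → 
      Module.finrank k (NI I v) = n - d)
    (v0 : Fin (n+1) → k) (hv0 : v0 ≠ 0) (hv0I : ∀ g ∈ I, eval v0 g = 0) :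
    ∃ Z : Set (MvPolynomial (Fin (n+1)) k), IsZClosed k Z ∧ IsCone k Z ∧
      (∃ h : MvPolynomial (Fin (n+1)) k, h.IsHomogeneous a ∧ h ≠ 0 ∧ eval v0 h = 0 ∧ h ∉ Z) ∧
      (∀ h : MvPolynomial (Fin (n+1)) k, h.IsHomogeneous a → eval v0 h = 0 → h ∉ Z → 
        ∀ v : Fin (n+1) → k, v ≠ 0 → (∀ g ∈ I, eval v g = 0) → gradientAt h v ∉ NI I v) := by
  classical
  haveI : Infinite k := inferInstance
  let W : Submodule k (MvPolynomial (Fin (n+1)) k) := homogeneousSubmodule (Fin (n+1)) k a ⊓ 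
    LinearMap.ker (aeval (R := k) v0).toLinearMap
  have hWmem : ∀ h, h ∈ W ↔ h.IsHomogeneous a ∧ eval v0 h = 0 := by
    intro h
    rw [← coe_aeval_eq_eval]
    rfl
  haveI : Module.Finite k (homogeneousSubmodule (Fin (n+1)) k a) := 
    Module.Finite.iff_fg.mpr (homogeneousSubmodule_fg _ _ a)
  haveI : Module.Finite k W := Submodule.finiteDimensional_of_le inf_le_left
  let b := Module.finBasis k W
  set w := Module.finrank k W with hw
  let h : Fin w → MvPolynomial (Fin (n+1)) k := fun i => (b i : MvPolynomial (Fin (n+1)) k)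
  have hh : ∀ i, (h i).IsHomogeneous a := fun i => ((hWmem _).mp (b i).2).1
  have hhW : ∀ i, h i ∈ W := fun i => (b i).2
  have hext := fun i => LinearMap.exists_extend (b.coord i)
  choose φ hφ using hext
  have hφ' : ∀ i (x : W), φ i x = b.repr x i := fun i x => by
    have := LinearMap.congr_fun (hφ i) x
    simpa using this
  have hrep : ∀ x ∈ W, ∑ i, φ i x • h i = x := by
    intro x hx
    have := congrArg (Subtype.val) (b.sum_repr ⟨x, hx⟩)
    simp only [← hφ', Submodule.coe_sum, Submodule.coe_smul] at this
    exact this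
  have hφt : ∀ (t : Fin w → k) i, φ i (∑ j, t j • h j) = t i := by
    intro t i
    have e : (∑ j, t j • h j) = ((∑ j, t j • b j : W) : MvPolynomial (Fin (n+1)) k) := by
      simp [h]
    rw [e, hφ', b.repr_sum_self]
  -- the piece at v0
  obtain ⟨u, hu0, huN⟩ := exists_perp_notMem hd hdn v0 (NI I v0) (hsm v0 hv0 hv0I)
  obtain ⟨l, hl0, hl1⟩ := exists_functional (NI I v0) u huN
  let F0 : MvPolynomial (Fin w) k := ∑ i, C (∑ j, l j * gradientAt (h i) v0 j) * X i
  have hF0e : ∀ t : Fin w → k, eval t F0 = ∑ j, l j * gradientAt (∑ i, t i • h i) v0 j := by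
    intro t
    simp only [F0, map_sum, map_mul, eval_C, eval_X]
    rw [← gradMap_apply, map_sum]
    simp only [map_smul, gradMap_apply, Finset.sum_apply, Pi.smul_apply, smul_eq_mul, Finset.mul_sum,
      Finset.sum_mul]
    rw [Finset.sum_comm]
    refine Finset.sum_congr rfl fun j _ => Finset.sum_congr rfl fun i _ => by ring
  have hF0ne : F0 ≠ 0 := by
    obtain ⟨g, hg1, hg2, hg3⟩ := grad_surj0 ha v0 hv0 u hu0
    intro h0
    have := hF0e (fun i => φ i g)
    rw [hrep g ((hWmem g).mpr ⟨hg1, hg2⟩), hg3, hl1, h0, map_zero] at this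
    exact zero_ne_one this
  obtain ⟨F1, hF1ne, hF1⟩ := bertini_all hdn hI hp ht hsm h hh
  let F := F0 * F1
  have hFne : F ≠ 0 := mul_ne_zero hF0ne hF1ne
  have hbad : ∀ t : Fin w → k, (∃ v : Fin (n+1) → k, v ≠ 0 ∧ (∀ g ∈ I, eval v g = 0) ∧
      gradientAt (∑ i, t i • h i) v ∈ NI I v) → eval t F = 0 := by
    rintro t ⟨v, hv, hvI, hvN⟩
    have hhom : (∑ i, t i • h i) ∈ W := Submodule.sum_mem _ fun i _ => Submodule.smul_mem _ _ (hhW i)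
    by_cases hc : ∃ c : k, v = c • v0
    · obtain ⟨c, rfl⟩ := hc
      have hc0 : c ≠ 0 := by rintro rfl; simp at hv
      have e : eval t F0 = 0 := by
        rw [hF0e]
        apply hl0
        rw [NI_smul hI c hc0, gradientAt_smul ((hWmem _).mp hhom).1] at hvN
        have := Submodule.smul_mem _ ((c ^ (a-1))⁻¹) hvN
        rwa [smul_smul, inv_mul_cancel₀ (pow_ne_zero _ hc0), one_smul] at this
      simp only [F, map_mul, e, zero_mul]
    · push Not at hc
      have e : eval t F1 = 0 := by
        apply hF1
        refine ⟨v, hv, hvI, ?_, hvN⟩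
        rw [eq_top_iff]
        intro x _
        obtain ⟨g, hg1, hg2, rfl⟩ := grad_surj ha v0 v hc x
        rw [← hrep g ((hWmem g).mpr ⟨hg1, hg2⟩), ← gradMap_apply, map_sum]
        refine Submodule.sum_mem _ fun i _ => ?_
        rw [map_smul]
        exact Submodule.smul_mem _ _ (Submodule.subset_span ⟨i, rfl⟩)
      simp only [F, map_mul, e, mul_zero]
  refine ⟨{g | ∀ c : k, eval (fun i => φ i (c • g)) F = 0}, ?_, ?_, ?_, ?_⟩
  · refine ⟨Set.range fun c : k => fun g => eval (fun i => φ i (c • g)) F, ?_, ?_⟩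
    · rintro _ ⟨c, rfl⟩
      exact ⟨w, fun i => c • φ i, F, by funext g; simp [map_smul]⟩
    · ext g; simp
  · intro c g hg c'
    have := hg (c' * c)
    rwa [mul_smul] at this
  · have : ∃ t : Fin w → k, eval t F ≠ 0 := by
      by_contra hcon
      push Not at hcon
      exact hFne (MvPolynomial.funext fun t => by rw [hcon t, map_zero])
    obtain ⟨t, ht⟩ := this
    have hm : (∑ i, t i • h i) ∈ W := Submodule.sum_mem _ fun i _ => Submodule.smul_mem _ _ (hhW i)
    refine ⟨∑ i, t i • h i, ((hWmem _).mp hm).1, ?_, ((hWmem _).mp hm).2, ?_⟩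
    · intro h0
      apply ht
      apply hbad
      refine ⟨v0, hv0, hv0I, ?_⟩
      rw [h0, ← gradMap_apply, map_zero]
      exact Submodule.zero_mem _
    · intro hz
      apply ht
      have := hz 1
      simp only [one_smul, hφt] at this
      exact this
  · intro g hg1 hg2 hgZ v hv hvI hvN
    apply hgZ
    intro c
    apply hbad
    refine ⟨v, hv, hvI, ?_⟩
    rw [hrep (c • g) (Submodule.smul_mem _ _ ((hWmem g).mpr ⟨hg1, hg2⟩)), ← gradMap_apply, map_smul]
    exact Submodule.smul_mem _ _ hvN

/-- The ideal of the point `v`. -/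
noncomputable def ptI {k : Type} [Field k] {n : ℕ} (v : Fin (n+1) → k) :
    Ideal (MvPolynomial (Fin (n+1)) k) := Ideal.span (Set.range fun j => X j - C (v j))

theorem sub_mem_ptI {k : Type} [Field k] {n : ℕ} (v : Fin (n+1) → k) (j : Fin (n+1)) :
    (X j - C (v j) : MvPolynomial (Fin (n+1)) k) ∈ ptI v := Ideal.subset_span ⟨j, rfl⟩

/-- The linear part `Σ c_j (X_j - v_j)`. -/
noncomputable def linAt {k : Type} [Field k] {n : ℕ} (v c : Fin (n+1) → k) :
    MvPolynomial (Fin (n+1)) k := ∑ j, C (c j) * (X j - C (v j))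

theorem linAt_mem {k : Type} [Field k] {n : ℕ} (v c : Fin (n+1) → k) : linAt v c ∈ ptI v :=
  Ideal.sum_mem _ fun j _ => Ideal.mul_mem_left _ _ (sub_mem_ptI v j)

theorem linAt_add {k : Type} [Field k] {n : ℕ} (v c c' : Fin (n+1) → k) :
    linAt v (c + c') = linAt v c + linAt v c' := by
  simp [linAt, add_mul, Finset.sum_add_distrib]

theorem linAt_smul {k : Type} [Field k] {n : ℕ} (v c : Fin (n+1) → k) (s : k) :
    linAt v (s • c) = C s * linAt v c := by
  simp [linAt, Finset.mul_sum, mul_assoc]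

theorem linAt_single {k : Type} [Field k] {n : ℕ} (v : Fin (n+1) → k) (j : Fin (n+1)) :
    linAt v (Pi.single j 1) = X j - C (v j) := by
  rw [linAt, Finset.sum_eq_single j]
  · simp
  · intro i _ hi; simp [Pi.single_eq_of_ne hi]
  · simp

theorem taylor {k : Type} [Field k] {n : ℕ} (v : Fin (n+1) → k) (g : MvPolynomial (Fin (n+1)) k) :
    g - C (eval v g) - linAt v (gradientAt g v) ∈ ptI v ^ 2 := by
  induction g using MvPolynomial.induction_on with
  | C a => 
    have : gradientAt (C a) v = 0 := by funext j; simp [gradientAt]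
    rw [this]; simp [linAt]
  | add p q hp hq =>
    have : gradientAt (p + q) v = gradientAt p v + gradientAt q v := map_add (gradMap v) p q
    rw [this, linAt_add, map_add, C_add]
    have := Ideal.add_mem _ hp hq
    convert this using 1
    ring
  | mul_X p i hp =>
    have hX : gradientAt (X i) v = Pi.single i 1 := by
      funext j; simp [gradientAt, pderiv_X, Pi.single_apply, eq_comm]
    rw [gradientAt_mul, hX, linAt_add, linAt_smul, linAt_smul, linAt_single, map_mul, eval_X]
    have h1 := Ideal.mul_mem_right (X i) _ hp
    have h2 : linAt v (gradientAt p v) * (X i - C (v i)) ∈ ptI v ^ 2 := by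
      rw [pow_two]; exact Ideal.mul_mem_mul (linAt_mem _ _) (sub_mem_ptI _ _)
    have := Ideal.add_mem _ h1 h2
    convert this using 1
    rw [C_mul]
    ring

theorem mem_ptI {k : Type} [Field k] {n : ℕ} (v : Fin (n+1) → k) (g : MvPolynomial (Fin (n+1)) k) :
    g ∈ ptI v ↔ eval v g = 0 := by
  constructor
  · intro h
    have : ptI v ≤ RingHom.ker (eval v) := by
      rw [ptI, Ideal.span_le]
      rintro _ ⟨j, rfl⟩
      simp [RingHom.mem_ker]
    exact this h
  · intro h
    have h1 := Ideal.pow_le_self (two_ne_zero) (taylor v g)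
    rw [h, C_0, sub_zero] at h1
    have := Ideal.add_mem _ h1 (linAt_mem v (gradientAt g v))
    simpa using this

theorem ptI_maximal {k : Type} [Field k] {n : ℕ} (v : Fin (n+1) → k) : (ptI v).IsMaximal := by
  have : ptI v = RingHom.ker (eval v) := by ext g; exact mem_ptI v g
  rw [this]
  exact RingHom.ker_isMaximal_of_surjective _ (fun c => ⟨C c, by simp⟩)

theorem exists_complement_vectors {k : Type} [Field k] {m c e : ℕ} (N : Submodule k (Fin m → k))
    (hN : Module.finrank k N = c) (hce : c + e = m) :
    ∃ u : Fin e → (Fin m → k), N ⊔ Submodule.span k (Set.range u) = ⊤ := by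
  obtain ⟨N', hN'⟩ := Submodule.exists_isCompl N
  have h1 := Submodule.finrank_add_eq_of_isCompl hN'
  have h2 : Module.finrank k N' = e := by
    rw [hN, Module.finrank_fin_fun] at h1; omega
  let b := Module.finBasisOfFinrankEq k N' h2
  refine ⟨fun i => (b i : Fin m → k), ?_⟩
  have h3 : Submodule.span k (Set.range fun i => (b i : Fin m → k)) = N' := by
    have := congrArg (Submodule.map N'.subtype) b.span_eq
    rw [Submodule.map_span, Submodule.map_top, Submodule.range_subtype, ← Set.range_comp] at this
    exact this
  rw [h3]; exact hN'.sup_eq_top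

theorem local_domain_aux {k : Type} [Field k] {n c e : ℕ} (J : Ideal (MvPolynomial (Fin (n+1)) k))
    (M : Ideal (MvPolynomial (Fin (n+1)) k ⧸ J)) [hM : M.IsMaximal] [hMp : M.IsPrime]
    (B : Type) [CommRing B] [IsLocalRing B] [Algebra (MvPolynomial (Fin (n+1)) k ⧸ J) B]
    [IsLocalization.AtPrime B M]
    (v : Fin (n+1) → k) (hJ : J ≤ ptI v) (hN : Module.finrank k (NI J v) = c) (hce : c + e = n + 1)
    (q : Ideal (MvPolynomial (Fin (n+1)) k)) (hq : q.IsPrime) (hJq : J ≤ q) (hqv : q ≤ ptI v) (hMv : M = (ptI v).map (Ideal.Quotient.mk J))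
    (ht : tdn k (MvPolynomial (Fin (n+1)) k ⧸ q) = e) 
    (f g : MvPolynomial (Fin (n+1)) k) (hfg : f * g ∈ J) :
    ∃ s, s ∉ ptI v ∧ (s * f ∈ J ∨ s * g ∈ J) := by
  classical
  haveI := ptI_maximal v
  let A := MvPolynomial (Fin (n+1)) k ⧸ J
  let π : MvPolynomial (Fin (n+1)) k →+* A := Ideal.Quotient.mk J
  have hπ : Function.Surjective π := Ideal.Quotient.mk_surjective
  have hker : RingHom.ker π = J := Ideal.mk_ker
  have hcomap : ∀ x, π x ∈ M ↔ x ∈ ptI v := by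
    intro x
    have := Ideal.comap_map_of_surjective' π hπ (ptI v)
    rw [hker, sup_eq_left.mpr hJ] at this
    rw [hMv, ← Ideal.mem_comap, this]
  haveI : IsNoetherianRing A := Ideal.Quotient.isNoetherianRing J
  haveI : IsNoetherianRing B := IsLocalization.isNoetherianRing M.primeCompl _ inferInstance
  let ι : A →+* B := algebraMap A B
  have hmB : M.map ι = IsLocalRing.maximalIdeal B := IsLocalization.AtPrime.map_eq_maximalIdeal M B
  let φ : MvPolynomial (Fin (n+1)) k →+* B := ι.comp π
  have hφm : (ptI v).map φ = IsLocalRing.maximalIdeal B := by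
    rw [← hmB, hMv, Ideal.map_map]
  have hφJ : ∀ x ∈ J, φ x = 0 := by
    intro x hx
    have : π x = 0 := Ideal.Quotient.eq_zero_iff_mem.mpr hx
    simp [φ, this]
  obtain ⟨u, hu⟩ := exists_complement_vectors (NI J v) hN hce
  let y : Fin e → B := fun i => φ (linAt v (u i))
  have hspan : Ideal.span (Set.range y) = IsLocalRing.maximalIdeal B := by
    apply le_antisymm
    · rw [Ideal.span_le]
      rintro _ ⟨i, rfl⟩
      rw [← hφm]
      exact Ideal.mem_map_of_mem _ (linAt_mem _ _)
    · apply Submodule.le_of_le_smul_of_le_jacobson_bot (I := IsLocalRing.maximalIdeal B)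
      · exact IsNoetherian.noetherian _
      · exact IsLocalRing.maximalIdeal_le_jacobson _
      · have hall : ∀ x : Fin (n+1) → k, φ (linAt v x) ∈ Ideal.span (Set.range y) ⊔ 
            IsLocalRing.maximalIdeal B • IsLocalRing.maximalIdeal B := by
          intro x
          have hx : x ∈ NI J v ⊔ Submodule.span k (Set.range u) := by rw [hu]; trivial
          obtain ⟨x1, hx1, x2, hx2, rfl⟩ := Submodule.mem_sup.mp hx
          rw [linAt_add, map_add]
          apply Ideal.add_mem
          · obtain ⟨g, hg, rfl⟩ := mem_NI.mp hx1
            have h1 := taylor v g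
            rw [(mem_ptI v g).mp (hJ hg), C_0, sub_zero] at h1
            have h2 := Ideal.mem_map_of_mem φ h1
            rw [Ideal.map_pow, hφm, map_sub, hφJ g hg, zero_sub, pow_two] at h2
            apply Ideal.mem_sup_right
            have := neg_mem h2
            rw [neg_neg] at this
            exact this
          · apply Ideal.mem_sup_left
            obtain ⟨c, rfl⟩ := (Submodule.mem_span_range_iff_exists_fun k).mp hx2
            have : linAt v (∑ i, c i • u i) = ∑ i, C (c i) * linAt v (u i) := by
              have h0 : linAt v (0 : Fin (n+1) → k) = 0 := by simp [linAt]
              let L : (Fin (n+1) → k) →+ MvPolynomial (Fin (n+1)) k := 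
                ⟨⟨linAt v, h0⟩, linAt_add v⟩
              have h1 : L (∑ i, c i • u i) = ∑ i, L (c i • u i) := map_sum L _ _
              have h2 : ∀ x, L x = linAt v x := fun _ => rfl
              simpa only [h2, linAt_smul] using h1
            rw [this, map_sum]
            refine Ideal.sum_mem _ fun i _ => ?_
            rw [map_mul]
            exact Ideal.mul_mem_left _ _ (Ideal.subset_span ⟨i, rfl⟩)
        rw [← hφm]
        rw [hφm]
        conv_lhs => rw [← hφm]
        rw [ptI, Ideal.map_span, Ideal.span_le]
        rintro _ ⟨_, ⟨j, rfl⟩, rfl⟩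
        have := hall (Pi.single j 1)
        rw [linAt_single] at this
        exact this
  have hheight : (e : ℕ∞) ≤ (IsLocalRing.maximalIdeal B).height := by
    have h1 : (IsLocalRing.maximalIdeal B).height = M.height := by
      have h2 := IsLocalization.AtPrime.ringKrullDim_eq_height M B
      rw [← IsLocalRing.maximalIdeal_height_eq_ringKrullDim] at h2
      exact_mod_cast h2
    rw [h1]
    let P : Ideal A := q.map π
    haveI : P.IsPrime := Ideal.map_isPrime_of_surjective hπ (by rw [hker]; exact hJq)
    have hPM : P ≤ M := by rw [hMv]; exact Ideal.map_mono hqv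
    have htP : tdn k (A ⧸ P) = e := by
      rw [← ht]
      exact tdn_eq_of_equiv (DoubleQuot.quotQuotEquivQuotOfLEₐ k hJq)
    have := height_add_tdn_le M e P hPM htP
    exact le_trans le_add_self this
  haveI hdom : IsDomain B := isDomain_of_regular e B y hspan hheight
  have hmul : φ f * φ g = 0 := by rw [← map_mul]; exact hφJ _ hfg
  have hfin : ∀ x, φ x = 0 → ∃ s, s ∉ ptI v ∧ s * x ∈ J := by
    intro x hx
    obtain ⟨s, hs⟩ := (IsLocalization.map_eq_zero_iff M.primeCompl B (π x)).mp hx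
    obtain ⟨s', hs'⟩ := hπ s
    refine ⟨s', ?_, ?_⟩
    · rw [← hcomap, hs']; exact s.2
    · rw [← hs', ← map_mul] at hs
      exact Ideal.Quotient.eq_zero_iff_mem.mp hs
  rcases mul_eq_zero.mp hmul with h | h
  · obtain ⟨s, h1, h2⟩ := hfin f h; exact ⟨s, h1, Or.inl h2⟩
  · obtain ⟨s, h1, h2⟩ := hfin g h; exact ⟨s, h1, Or.inr h2⟩

theorem local_domain {k : Type} [Field k] {n c e : ℕ} (J : Ideal (MvPolynomial (Fin (n+1)) k))
    (v : Fin (n+1) → k) (hJ : J ≤ ptI v) (hN : Module.finrank k (NI J v) = c) (hce : c + e = n + 1)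
    (q : Ideal (MvPolynomial (Fin (n+1)) k)) (hq : q.IsPrime) (hJq : J ≤ q) (hqv : q ≤ ptI v)
    (ht : tdn k (MvPolynomial (Fin (n+1)) k ⧸ q) = e) 
    (f g : MvPolynomial (Fin (n+1)) k) (hfg : f * g ∈ J) :
    ∃ s, s ∉ ptI v ∧ (s * f ∈ J ∨ s * g ∈ J) := by
  haveI := ptI_maximal v
  haveI hM : ((ptI v).map (Ideal.Quotient.mk J)).IsMaximal := 
    Ideal.IsMaximal.map_of_surjective_of_ker_le Ideal.Quotient.mk_surjective (by rw [Ideal.mk_ker]; exact hJ) 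
  haveI hMp : ((ptI v).map (Ideal.Quotient.mk J)).IsPrime := hM.isPrime
  exact local_domain_aux J _ (Localization.AtPrime ((ptI v).map (Ideal.Quotient.mk J))) v hJ hN hce
    q hq hJq hqv rfl ht f g hfg

theorem NI_sup_span {k : Type} [Field k] {n : ℕ} (I : Ideal (MvPolynomial (Fin (n+1)) k))
    (h : MvPolynomial (Fin (n+1)) k) (v : Fin (n+1) → k) (hv : eval v h = 0) :
    NI (I ⊔ Ideal.span {h}) v = NI I v ⊔ Submodule.span k {gradientAt h v} := by
  apply le_antisymm
  · intro u hu
    obtain ⟨f, hf, rfl⟩ := mem_NI.mp hu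
    obtain ⟨f1, hf1, f2, hf2, rfl⟩ := Submodule.mem_sup.mp hf
    obtain ⟨g, rfl⟩ := Ideal.mem_span_singleton'.mp hf2
    rw [← gradMap_apply v (f1 + g * h), map_add, gradMap_apply, gradMap_apply, gradientAt_mul, hv, zero_smul,
      add_zero]
    exact Submodule.add_mem_sup (mem_NI.mpr ⟨f1, hf1, rfl⟩)
      (Submodule.smul_mem _ _ (Submodule.mem_span_singleton_self _))
  · refine sup_le ?_ ?_
    · intro u hu
      obtain ⟨f, hf, rfl⟩ := mem_NI.mp hu
      exact mem_NI.mpr ⟨f, (le_sup_left : I ≤ I ⊔ Ideal.span {h}) hf, rfl⟩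
    · rw [Submodule.span_singleton_le_iff_mem]
      exact mem_NI.mpr ⟨h, (le_sup_right : Ideal.span {h} ≤ I ⊔ Ideal.span {h})
        (Ideal.mem_span_singleton_self h), rfl⟩

/-- A minimal prime of `J` through a point where the Jacobian rank is right is determined by
the local ring. -/
theorem minPrime_local {k : Type} [Field k] {n c e : ℕ} (J : Ideal (MvPolynomial (Fin (n+1)) k))
    (v : Fin (n+1) → k) (hN : Module.finrank k (NI J v) = c) (hce : c + e = n + 1)
    (q : Ideal (MvPolynomial (Fin (n+1)) k)) (hq : q ∈ J.minimalPrimes) (hqv : q ≤ ptI v)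
    (ht : tdn k (MvPolynomial (Fin (n+1)) k ⧸ q) = e) (g : MvPolynomial (Fin (n+1)) k) :
    g ∈ q ↔ ∃ s, s ∉ ptI v ∧ s * g ∈ J := by
  have hqp : q.IsPrime := hq.1.1
  have hJq : J ≤ q := hq.1.2
  have hpp : (ptI v).IsPrime := (ptI_maximal v).isPrime
  let K : Ideal (MvPolynomial (Fin (n+1)) k) :=
    { carrier := {g | ∃ s, s ∉ ptI v ∧ s * g ∈ J}
      add_mem' := by
        rintro x y ⟨s, hs, hx⟩ ⟨t, ht, hy⟩
        refine ⟨s * t, fun hst => (hpp.mem_or_mem hst).elim hs ht, ?_⟩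
        have : s * t * (x + y) = t * (s * x) + s * (t * y) := by ring
        rw [this]
        exact J.add_mem (J.mul_mem_left _ hx) (J.mul_mem_left _ hy)
      zero_mem' := ⟨1, fun h1 => hpp.ne_top ((Ideal.eq_top_iff_one _).mpr h1), by simp⟩
      smul_mem' := by
        rintro r x ⟨s, hs, hx⟩
        refine ⟨s, hs, ?_⟩
        have : s * (r • x) = r * (s * x) := by rw [smul_eq_mul]; ring
        rw [this]
        exact J.mul_mem_left _ hx }
  have hKmem : ∀ g, g ∈ K ↔ ∃ s, s ∉ ptI v ∧ s * g ∈ J := fun g => Iff.rfl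
  have hKq : K ≤ q := by
    intro x hx
    obtain ⟨s, hs, hsx⟩ := (hKmem x).mp hx
    exact (hqp.mem_or_mem (hJq hsx)).resolve_left fun h => hs (hqv h)
  have hJK : J ≤ K := fun x hx =>
    (hKmem x).mpr ⟨1, fun h1 => hpp.ne_top ((Ideal.eq_top_iff_one _).mpr h1), by simpa using hx⟩
  have hKp : K.IsPrime := by
    refine ⟨fun h => hqp.ne_top (top_le_iff.mp (h ▸ hKq)), ?_⟩
    intro x y hxy
    obtain ⟨s, hs, hsx⟩ := (hKmem _).mp hxy
    obtain ⟨t, ht1, ht2⟩ := local_domain J v (hJq.trans hqv) hN hce q hqp hJq hqv ht (s * x) y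
      (by rw [mul_assoc]; exact hsx)
    rcases ht2 with h | h
    · left
      exact (hKmem _).mpr ⟨t * s, fun hst => (hpp.mem_or_mem hst).elim ht1 hs, by
        rw [mul_assoc]; exact h⟩
    · right
      exact (hKmem _).mpr ⟨t, ht1, h⟩
  have hqK : q ≤ K := hq.2 ⟨hKp, hJK⟩ hKq
  rw [← hKmem]
  exact ⟨fun h => hqK h, fun h => hKq h⟩

theorem unique_minPrime {k : Type} [Field k] [IsAlgClosed k] {n d a : ℕ} (ha : 1 ≤ a) (hd : 2 ≤ d)
    (hdn : d ≤ n)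
    {I : Ideal (MvPolynomial (Fin (n+1)) k)} (hI : HomI I) (hp : I.IsPrime)
    (ht : tdn k (MvPolynomial (Fin (n+1)) k ⧸ I) = d + 1)
    (h : MvPolynomial (Fin (n+1)) k) (hh : h.IsHomogeneous a) (hhI : h ∉ I)
    (hN : ∀ v : Fin (n+1) → k, v ≠ 0 → (∀ g ∈ I ⊔ Ideal.span {h}, eval v g = 0) →
      Module.finrank k (NI (I ⊔ Ideal.span {h}) v) = n - d + 1)
    (q1 q2 : Ideal (MvPolynomial (Fin (n+1)) k))
    (hq1 : q1 ∈ (I ⊔ Ideal.span {h}).minimalPrimes)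
    (hq2 : q2 ∈ (I ⊔ Ideal.span {h}).minimalPrimes) : q1 = q2 := by
  haveI : Infinite k := IsAlgClosed.instInfinite
  by_contra hne
  set J := I ⊔ Ideal.span {h} with hJ
  have hJh : HomI J := hI.sup (HomI.span _ (by
    intro f hf; rw [Set.mem_singleton_iff] at hf; exact ⟨a, hf ▸ hh⟩))
  have htq : ∀ q ∈ J.minimalPrimes, tdn k (MvPolynomial (Fin (n+1)) k ⧸ q) = d := by
    intro q hq
    have := tdn_section I q h hhI hq
    omega
  have huniq : ∀ q ∈ J.minimalPrimes, ∀ q' ∈ J.minimalPrimes, ∀ v : Fin (n+1) → k, v ≠ 0 →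
      q ≤ ptI v → q' ≤ ptI v → q = q' := by
    intro q hq q' hq' v hv hqv hqv'
    have hN' := hN v hv (fun g hg => (mem_ptI v g).mp (hqv (hq.1.2 hg)))
    ext g
    rw [minPrime_local J v hN' (by omega : n - d + 1 + d = n + 1) q hq hqv (htq q hq),
      minPrime_local J v hN' (by omega : n - d + 1 + d = n + 1) q' hq' hqv' (htq q' hq')]
  have hfin : (J.minimalPrimes \ {q1}).Finite :=
    (Ideal.finite_minimalPrimes_of_isNoetherianRing _ J).subset Set.diff_subset
  let I2 : Ideal (MvPolynomial (Fin (n+1)) k) := sInf (J.minimalPrimes \ {q1})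
  have hI2 : HomI I2 := by
    intro f hf i
    rw [Submodule.mem_sInf] at hf ⊢
    intro q hq
    exact hJh.minimalPrime hq.1 f (hf q hq) i
  refine connected_section ha hd hI hp ht h hh hhI q1 I2 (hJh.minimalPrime hq1) hI2 ?_ ?_ q1 q2
    hq1 hq2 le_rfl (sInf_le ⟨hq2, fun h => hne h.symm⟩)
  · rw [← Ideal.sInf_minimalPrimes]
    refine le_sInf fun q hq => ?_
    by_cases hqq : q = q1
    · rw [hqq]; exact Ideal.mul_le_left
    · have h3 : I2 ≤ q := sInf_le ⟨hq, hqq⟩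
      exact le_trans Ideal.mul_le_right h3
  · rw [← MvPolynomial.vanishingIdeal_zeroLocus_eq_radical (K := k)]
    intro f hf
    rw [mem_vanishingIdeal_iff]
    intro v hv
    rw [mem_zeroLocus_iff] at hv
    have hle : q1 ⊔ I2 ≤ ptI v := fun g hg => (mem_ptI v g).mpr (by
      have := hv g hg
      rwa [aeval_eq_eval] at this)
    have hv0 : v = 0 := by
      by_contra hv0
      have h2 : I2 ≤ ptI v := le_sup_right.trans hle
      have hI2' : I2 = hfin.toFinset.inf id := by
        rw [Finset.inf_id_eq_sInf, hfin.coe_toFinset]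
      rw [hI2', Ideal.IsPrime.inf_le' (ptI_maximal v).isPrime] at h2
      obtain ⟨q, hq, hqv⟩ := h2
      rw [hfin.mem_toFinset] at hq
      exact hq.2 (huniq q hq.1 q1 hq1 v hv0 hqv (le_sup_left.trans hle))
    rw [aeval_eq_eval, hv0]
    exact (mem_irrI f).mp hf

theorem smooth_section {k : Type} [Field k] [IsAlgClosed k] {n d a : ℕ} (ha : 1 ≤ a) (hd : 2 ≤ d)
    (hdn : d ≤ n) (X : Set (ProjPt k n)) (hXc : IsClosedSub X) (hXi : IsIrredSub X)
    (ht : tdn k (MvPolynomial (Fin (n+1)) k ⧸ Iv X) = d + 1)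
    (hsm : ∀ v : Fin (n+1) → k, v ≠ 0 → (∀ g ∈ Iv X, eval v g = 0) →
      Module.finrank k (NI (Iv X) v) = n - d)
    (h : MvPolynomial (Fin (n+1)) k) (hh : h.IsHomogeneous a)
    (hgood : ∀ v : Fin (n+1) → k, v ≠ 0 → (∀ g ∈ Iv X, eval v g = 0) →
      gradientAt h v ∉ NI (Iv X) v) :
    IsSmoothVariety (X ∩ projZeroLocus {h}) (d - 1) := by
  haveI : Infinite k := IsAlgClosed.instInfinite
  have hp : (Iv X).IsPrime := Iv_isPrime hXi
  have hI : HomI (Iv X) := Iv_homI X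
  have hhI : h ∉ Iv X := by
    intro hmem
    obtain ⟨x, hx⟩ := hXi.1
    induction x using Projectivization.ind with
    | h v hv =>
      exact hgood v hv ((mem_closed_iff hXc v hv).mp hx) (mem_NI.mpr ⟨h, hmem, rfl⟩)
  set I := Iv X with hIdef
  set J := I ⊔ Ideal.span {h} with hJ
  have hhJ : h ∈ J := (le_sup_right : Ideal.span {h} ≤ J) (Ideal.mem_span_singleton_self h)
  have hIJ : I ≤ J := le_sup_left
  have hJh : HomI J := hI.sup (HomI.span _ (by
    intro f hf; rw [Set.mem_singleton_iff] at hf; exact ⟨a, hf ▸ hh⟩))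
  have hN : ∀ v : Fin (n+1) → k, v ≠ 0 → (∀ g ∈ J, eval v g = 0) →
      Module.finrank k (NI J v) = n - d + 1 := by
    intro v hv hvJ
    have hvI : ∀ g ∈ I, eval v g = 0 := fun g hg => hvJ g (hIJ hg)
    rw [hJ, NI_sup_span I h v (hvJ h hhJ), Submodule.finrank_sup_span_singleton (hgood v hv hvI),
      hsm v hv hvI]
  have hJirr : J ≤ irrI k n := by
    refine sup_le (hI.le_irrI hp.ne_top) ?_
    rw [Ideal.span_singleton_le_iff_mem, mem_irrI]
    have := eval_smul_of_homog hh (0 : k) 0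
    rw [zero_smul, zero_pow (by omega), zero_mul] at this
    exact this
  haveI := (irrI_maximal k n).isPrime
  obtain ⟨q, hq, -⟩ := Ideal.exists_minimalPrimes_le hJirr
  have htq : tdn k (MvPolynomial (Fin (n+1)) k ⧸ q) = d := by
    have := tdn_section I q h hhI hq
    omega
  have hqp : q.IsPrime := hq.1.1
  have hJq : J ≤ q := hq.1.2
  have hqh : HomI q := hJh.minimalPrime hq
  have hrad : J.radical = q := by
    rw [← Ideal.sInf_minimalPrimes]
    refine le_antisymm (sInf_le hq) (le_sInf fun q' hq' => ?_)
    exact (unique_minPrime ha hd hdn hI hp ht h hh hhI hN q q' hq hq').le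
  have hqirr : ¬ irrI k n ≤ q := by
    intro hle
    have := (irrI_maximal k n).eq_of_le hqp.ne_top hle
    rw [← this, tdn_irrI] at htq
    omega
  have hzero : ∀ v : Fin (n+1) → k, (∀ g ∈ q, eval v g = 0) ↔ (∀ g ∈ J, eval v g = 0) := by
    intro v
    refine ⟨fun H g hg => H g (hJq hg), fun H g hg => ?_⟩
    rw [← hrad] at hg
    obtain ⟨m, hm⟩ := hg
    have := H _ hm
    rw [map_pow] at this
    have hm0 : m ≠ 0 := by
      rintro rfl
      simp at this
    exact (pow_eq_zero_iff hm0).mp this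
  have hY : X ∩ projZeroLocus {h} = Vp q := by
    ext x
    induction x using Projectivization.ind with
    | h v hv =>
      rw [mk_mem_Vp hqh v hv, hzero v, Set.mem_inter_iff, mem_closed_iff hXc v hv]
      have hz : Projectivization.mk k v hv ∈ projZeroLocus {h} ↔ eval v h = 0 := by
        rw [← vanishesAt_mk hh v hv]
        simp [projZeroLocus]
      rw [hz]
      constructor
      · rintro ⟨h1, h2⟩ g hg
        have : J ≤ ptI v := by
          refine sup_le (fun g hg => (mem_ptI v g).mpr (h1 g hg)) ?_
          rw [Ideal.span_singleton_le_iff_mem, mem_ptI]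
          exact h2
        exact (mem_ptI v g).mp (this hg)
      · intro H
        exact ⟨fun g hg => H g (hIJ hg), H h hhJ⟩
  have hIY : Iv (Vp q) = q := Iv_Vp hqh hqp hqirr
  have hYi : IsIrredSub (Vp q) := isIrredSub_of_prime (by rw [hIY]; exact hqp)
  rw [hY]
  refine ⟨Vp_closed q, hYi, hasDim_of_tdn (d - 1) _ (Vp_closed q) hYi ?_, ?_⟩
  · rw [hIY, htq]; omega
  · intro x hx v hv hvx
    rw [span_homVan, hIY]
    rw [← hvx, mk_mem_Vp hqh v hv] at hx
    have hqv : q ≤ ptI v := fun g hg => (mem_ptI v g).mpr (hx g hg)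
    have hN' := hN v hv ((hzero v).mp hx)
    have hNN : NI q v = NI J v := by
      apply le_antisymm
      · intro u hu
        obtain ⟨g, hg, rfl⟩ := mem_NI.mp hu
        obtain ⟨s, hs, hsg⟩ := (minPrime_local J v hN' (by omega : n - d + 1 + d = n + 1) q hq hqv
          htq g).mp hg
        rw [mem_ptI] at hs
        have h1 : gradientAt (s * g) v ∈ NI J v := mem_NI.mpr ⟨_, hsg, rfl⟩
        rw [gradientAt_mul, hx g hg, zero_smul, add_zero] at h1
        have h2 := (NI J v).smul_mem (eval v s)⁻¹ h1
        rwa [smul_smul, inv_mul_cancel₀ hs, one_smul] at h2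
      · intro u hu
        obtain ⟨g, hg, rfl⟩ := mem_NI.mp hu
        exact mem_NI.mpr ⟨g, hJq hg, rfl⟩
    rw [hNN, hN']
    omega

/-- **Bertini-type theorem (one point, hypersurfaces of degree `a > 1`).**
Let `X` be an irreducible smooth projective variety of dimension `d ≥ 2` in `ℙⁿ` over an
algebraically closed field of characteristic zero.  For any closed point `P0` on `X` and any
degree `a > 1`, a general hypersurface of degree `a` passing through `P0` intersects `X` in an
irreducible smooth subvariety of codimension `1` on `X`:  there is a proper Zariski-closed cone
`Z` in the space of degree-`a` forms such that some degree-`a` form through `P0` lies outside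
`Z`, and for every degree-`a` form `h` through `P0` outside `Z` the intersection of `X` with
the hypersurface `h = 0` is an irreducible smooth variety of dimension `d - 1`. -/
theorem general_hypersurface_through_point_on_X_smooth_irreducible
    {k : Type} [Field k] [IsAlgClosed k] [CharZero k] {n : ℕ}
    (X : Set (ProjPt k n)) (d : ℕ) (hd : 2 ≤ d) (hX : IsSmoothVariety X d)
    (P0 : ProjPt k n) (hP0 : P0 ∈ X) (a : ℕ) (ha : 1 < a) :
    ∃ Z : Set (MvPolynomial (Fin (n+1)) k), IsZClosed k Z ∧ IsCone k Z ∧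
      (∃ h : MvPolynomial (Fin (n+1)) k,
        h.IsHomogeneous a ∧ h ≠ 0 ∧ VanishesAt h P0 ∧ h ∉ Z) ∧
      (∀ h : MvPolynomial (Fin (n+1)) k,
        h.IsHomogeneous a → h ≠ 0 → VanishesAt h P0 → h ∉ Z →
          IsSmoothVariety (X ∩ projZeroLocus {h}) (d - 1)) := by
  haveI : Infinite k := IsAlgClosed.instInfinite
  obtain ⟨hXc, hXi, hXd, hXs⟩ := hX
  have hp : (Iv X).IsPrime := Iv_isPrime hXi
  have hI : HomI (Iv X) := Iv_homI X
  have ht := tdn_of_hasDim d X hXc hXi hXd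
  have hdn : d ≤ n := by
    have := tdn_quot_le_n (Iv X)
    omega
  have hsm : ∀ v : Fin (n+1) → k, v ≠ 0 → (∀ g ∈ Iv X, eval v g = 0) →
      Module.finrank k (NI (Iv X) v) = n - d := by
    intro v hv hz
    rw [← span_homVan]
    exact hXs _ ((mem_closed_iff hXc v hv).mpr hz) v hv rfl
  induction P0 using Projectivization.ind with
  | h v0 hv0 =>
    obtain ⟨Z, hZ1, hZ2, ⟨h, hh, hh0, hhv, hhZ⟩, hZ4⟩ := bertini (by omega) hdn ha hI hp ht hsm v0 hv0
      ((mem_closed_iff hXc v0 hv0).mp hP0)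
    refine ⟨Z, hZ1, hZ2, ⟨h, hh, hh0, (vanishesAt_mk hh v0 hv0).mpr hhv, hhZ⟩, ?_⟩
    intro g hg _ hgv hgZ
    exact smooth_section (by omega) hd hdn X hXc hXi ht hsm g hg
      (hZ4 g hg ((vanishesAt_mk hg v0 hv0).mp hgv) hgZ)
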